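/- arXiv:math/0002064 — 2 statements merged into one kernel-verified Lean document; each statement's English description precedes it below -/
import Mathlib

section
/- Let V be a commutative ring and m ⊆ V an ideal satisfying m·m = m such that m̃ = m ⊗_V m is a flat V-module. Let f : R → S be a homomorphism of commutative V-algebras such that m·ker(f) = 0 and there exists a finitely generated R-submodule Q ⊆ S with m·S ⊆ Q (f is a finite monomorphism of almost algebras). Let M be an R-module such that m·Tor_1^S(S ⊗_R M, N) = 0 for every S-module N (S ⊗_R M is almost flat over S). Then m·Tor_1^R(M, N) = 0 for every R-module N (M is almost flat over R). -/
universe u v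

open CategoryTheory TensorProduct

/-- Almost flat module: `m·Tor_1^R(M, N) = 0` for all `N`. -/
def IsAlmostFlat (V : Type v) [CommRing V] (m : Ideal V)
    (R : Type u) [CommRing R] [Algebra V R]
    (M : Type u) [AddCommGroup M] [Module R M] : Prop :=
  ∀ N : ModuleCat.{u} R, ∀ a ∈ m,
    ∀ x : ((Tor (ModuleCat.{u} R) 1).obj (ModuleCat.of R M)).obj N,
      algebraMap V R a • x = 0

/-!
Let `K` be the relation module of `M` with respect to a set of generators. An element `c` of `R`
kills all `Tor₁(M, -)` if and only if, on every finite subset of `K`, multiplication by `c` is the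
restriction of a linear map from the free module to `K`; these `c` form an ideal. The relation
module of `S ⊗ M` is the `S`-span of `K`, so the ideal has to be descended from `S` to `R`.

Suppose `c • S` lies in the span of `e 1, …, e n`. After a free base change, each `c • e i` is a
root of a product of `n + 1` linear factors `X - r i j`. The ideals generated by one
`c • e i - r i (j i)` for each `i` multiply to `0` as `j` varies, and modulo each of them `R → S` is
surjective up to `c ^ 2`, so the lifting extends through one factor at a time, at the cost of
`c ^ 3`. Hence `c ^ q` descends for `q = 3 * (n + 1) ^ n + 1`, which depends only on `n`.

Powers of elements of `m` need not generate `m`. Over a polynomial ring, however, `c` may be a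
generic combination `∑ i, a i • X i` with `a i ∈ m`, and linear functionals of its `q`-th power give
all symmetric combinations of `q`-fold products of the `a i`. Flatness of `m ⊗ m` writes any product
of `q + 1` elements of `m` in this form, and `m = m ^ (q + 1)`.
-/

section RelationModules

variable {ι R S : Type*} [CommRing R] [CommRing S] [Algebra R S]

variable (ι R S) in
/-- The canonical map from a free `R`-module to the free `S`-module on the same basis. -/
noncomputable def coordMap : (ι →₀ R) →ₗ[R] (ι →₀ S) :=
  Finsupp.mapRange.linearMap (Algebra.linearMap R S)

lemma coordMap_apply (x : ι →₀ R) (i : ι) : coordMap ι R S x i = algebraMap R S (x i) :=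
  rfl

lemma coordMap_single (i : ι) (r : R) :
    coordMap ι R S (Finsupp.single i r) = Finsupp.single i (algebraMap R S r) := by
  simp [coordMap]

variable (S) in
/-- The `S`-span of a submodule `K` of a free `R`-module. If `K` is the module of relations of `M`,
this is the module of relations of `S ⊗[R] M`. -/
noncomputable def scalarExt (K : Submodule R (ι →₀ R)) : Submodule S (ι →₀ S) :=
  Submodule.span S (coordMap ι R S '' K)

lemma coordMap_mem_scalarExt {K : Submodule R (ι →₀ R)} {x : ι →₀ R} (hx : x ∈ K) :
    coordMap ι R S x ∈ scalarExt S K :=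
  Submodule.subset_span (Set.mem_image_of_mem _ hx)

lemma scalarExt_scalarExt {T : Type*} [CommRing T] [Algebra R T] [Algebra T S] [IsScalarTower R T S]
    (K : Submodule R (ι →₀ R)) : scalarExt S (scalarExt T K) = scalarExt S K := by
  have coordMap_coordMap (x : ι →₀ R) :
      coordMap ι T S (coordMap ι R T x) = coordMap ι R S x :=
    Finsupp.ext fun i => (IsScalarTower.algebraMap_apply R T S (x i)).symm
  have hle : scalarExt T K ≤ ((scalarExt S K).restrictScalars T).comap (coordMap ι T S) := by
    refine Submodule.span_le.mpr ?_
    rintro _ ⟨x, hx, rfl⟩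
    simpa [coordMap_coordMap] using coordMap_mem_scalarExt hx
  refine le_antisymm (Submodule.span_le.mpr (Set.image_subset_iff.mpr hle))
    (Submodule.span_le.mpr ?_)
  rintro _ ⟨x, hx, rfl⟩
  rw [← coordMap_coordMap]
  exact coordMap_mem_scalarExt (coordMap_mem_scalarExt hx)

/-- The scalars `a` for which `K` is, up to multiplication by `a` and modulo the ideal `I`, locally
a direct summand: every finite subset of `K` admits a linear map `(ι →₀ R) → K` agreeing on it with
multiplication by `a` up to elements with coordinates in `I`. For `I = ⊥` and `a = 1` this is the
Chase–Villamayor criterion for flatness of `(ι →₀ R) ⧸ K`. -/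
def splitIdeal (I : Ideal R) (K : Submodule R (ι →₀ R)) : Ideal R where
  carrier := {a | ∀ X : Finset K, ∃ φ : (ι →₀ R) →ₗ[R] K,
    ∀ x ∈ X, ∀ i, (φ x - a • x : ι →₀ R) i ∈ I}
  zero_mem' _ := ⟨0, by simp⟩
  add_mem' {a b} ha hb X := by
    obtain ⟨φ, hφ⟩ := ha X
    obtain ⟨ψ, hψ⟩ := hb X
    refine ⟨φ + ψ, fun x hx i => ?_⟩
    convert I.add_mem (hφ x hx i) (hψ x hx i) using 1
    simp only [LinearMap.add_apply, Submodule.coe_add, Finsupp.sub_apply, Finsupp.add_apply,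
      Finsupp.smul_apply, smul_eq_mul]
    ring
  smul_mem' c a ha X := by
    obtain ⟨φ, hφ⟩ := ha X
    refine ⟨c • φ, fun x hx i => ?_⟩
    convert I.mul_mem_left c (hφ x hx i) using 1
    simp [mul_sub, mul_assoc]

lemma mem_splitIdeal {I : Ideal R} {K : Submodule R (ι →₀ R)} {a : R} :
    a ∈ splitIdeal I K ↔ ∀ X : Finset K, ∃ φ : (ι →₀ R) →ₗ[R] K,
      ∀ x ∈ X, ∀ i, (φ x - a • x : ι →₀ R) i ∈ I :=
  Iff.rfl

lemma mem_splitIdeal_bot {K : Submodule R (ι →₀ R)} {a : R} :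
    a ∈ splitIdeal ⊥ K ↔ ∀ X : Finset K, ∃ φ : (ι →₀ R) →ₗ[R] K, ∀ x ∈ X, φ x = a • x := by
  simp only [mem_splitIdeal, Ideal.mem_bot, Subtype.ext_iff, Finsupp.ext_iff, Finsupp.sub_apply,
    sub_eq_zero, Submodule.coe_smul]

lemma splitIdeal_top (K : Submodule R (ι →₀ R)) : splitIdeal ⊤ K = ⊤ :=
  eq_top_iff.mpr fun _ _ _ => ⟨0, by simp⟩

lemma mul_mem_splitIdeal {I J : Ideal R} {K : Submodule R (ι →₀ R)} {a c : R}
    (hc : ∀ x ∈ I, c * x ∈ J) (ha : a ∈ splitIdeal I K) : c * a ∈ splitIdeal J K := by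
  intro X
  obtain ⟨φ, hφ⟩ := ha X
  refine ⟨c • φ, fun x hx i => ?_⟩
  convert hc _ (hφ x hx i) using 1
  simp [mul_sub, mul_assoc]

variable (S) in
lemma exists_scalarExt_linearMap {K : Submodule R (ι →₀ R)} (φ : (ι →₀ R) →ₗ[R] K) :
    ∃ φS : (ι →₀ S) →ₗ[S] scalarExt S K, ∀ x, (φS (coordMap ι R S x) : ι →₀ S) =
      coordMap ι R S (φ x) := by
  refine ⟨Finsupp.linearCombination S fun i =>
    ⟨coordMap ι R S (φ (Finsupp.single i 1)), coordMap_mem_scalarExt (φ _).2⟩, fun x => ?_⟩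
  induction x using Finsupp.induction_linear with
  | zero => simp
  | add x y hx hy => simp [hx, hy]
  | single i r =>
    rw [← Finsupp.smul_single_one i r, map_smul φ]
    simp [coordMap_single]

lemma algebraMap_mem_splitIdeal_scalarExt {K : Submodule R (ι →₀ R)} {a : R}
    (ha : a ∈ splitIdeal ⊥ K) : algebraMap R S a ∈ splitIdeal ⊥ (scalarExt S K) := by
  classical
  refine mem_splitIdeal_bot.mpr fun X => ?_
  have hX : ((X.image (↑) : Finset (ι →₀ S)) : Set (ι →₀ S)) ⊆ scalarExt S K := by
    simp +contextual [Set.subset_def]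
  obtain ⟨Y, hYK, hXY⟩ := Submodule.subset_span_finite_of_subset_span hX
  obtain ⟨Z, hZK, rfl⟩ := Finset.subset_set_image_iff.mp hYK
  obtain ⟨φ, hφ⟩ := mem_splitIdeal_bot.mp ha (Z.subtype (· ∈ K))
  obtain ⟨φS, hφS⟩ := exists_scalarExt_linearMap S φ
  suffices H : ∀ x ∈ Submodule.span S (coordMap ι R S '' Z),
      (φS x : ι →₀ S) = algebraMap R S a • x from
    ⟨φS, fun x hx => Subtype.ext (H x (by simpa using hXY (Finset.mem_image_of_mem _ hx)))⟩
  intro x hx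
  induction hx using Submodule.span_induction with
  | mem _ h =>
    obtain ⟨z, hz, rfl⟩ := h
    have := hφ ⟨z, hZK hz⟩ (by simpa using hz)
    rw [hφS, this, algebraMap_smul]
    simp
  | zero => simp
  | add x y _ _ hx hy => simp [hx, hy]
  | smul s x _ hx => simp [hx, smul_comm s]

end RelationModules

section Tor

variable {R : Type u} [CommRing R] {c : R}

lemma forall_homology_smul_eq_zero_iff (S : ShortComplex (ModuleCat.{u} R)) :
    (∀ x : S.homology, c • x = 0) ↔ ∀ z : S.X₂, S.g z = 0 → ∃ w : S.X₁, S.f w = c • z := by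
  let e : S.homology ≃ₗ[R] _ ⧸ LinearMap.range S.moduleCatToCycles :=
    S.moduleCatHomologyIso.toLinearEquiv
  calc (∀ x : S.homology, c • x = 0)
    _ ↔ ∀ x : _ ⧸ LinearMap.range S.moduleCatToCycles, c • x = 0 :=
      by simp_rw [← Module.mem_annihilator, e.annihilator_eq]
    _ ↔ ∀ z : LinearMap.ker S.g.hom, ∃ w : S.X₁, S.f w = c • (z : S.X₂) := by
      refine (Submodule.mkQ_surjective _).forall.trans (forall_congr' fun z => ?_)
      rw [← map_smul, Submodule.mkQ_apply, Submodule.Quotient.mk_eq_zero]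
      exact exists_congr fun w => Subtype.ext_iff
    _ ↔ _ := Subtype.forall

lemma forall_tor_one_smul_eq_zero_iff_projectiveResolution {M N : ModuleCat.{u} R}
    (Q : ProjectiveResolution N) :
    (∀ x : ((Tor (ModuleCat.{u} R) 1).obj M).obj N, c • x = 0) ↔
      ∀ z : M ⊗[R] Q.complex.X 1, (Q.complex.d 1 0).hom.lTensor M z = 0 →
        ∃ w : M ⊗[R] Q.complex.X 2, (Q.complex.d 2 1).hom.lTensor M w = c • z := by
  let F := (MonoidalCategory.tensoringLeft (ModuleCat.{u} R)).obj M
  let K := (F.mapHomologicalComplex (ComplexShape.down ℕ)).obj Q.complex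
  let i : ((Tor (ModuleCat.{u} R) 1).obj M).obj N ≅ (K.sc' 2 1 0).homology :=
    Q.isoLeftDerivedObj F 1 ≪≫ K.homologyIsoSc' 2 1 0 (by simp) (by simp)
  calc (∀ x : ((Tor (ModuleCat.{u} R) 1).obj M).obj N, c • x = 0)
    _ ↔ ∀ x : (K.sc' 2 1 0).homology, c • x = 0 :=
      by simp_rw [← Module.mem_annihilator, i.toLinearEquiv.annihilator_eq]
    _ ↔ _ := forall_homology_smul_eq_zero_iff (K.sc' 2 1 0)

variable {M N : Type*} [AddCommGroup M] [Module R M] [AddCommGroup N] [Module R N]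

lemma lTensor_comp_exists_iff {L P₀ P₁ P₂ : Type*} [AddCommGroup L] [Module R L]
    [AddCommGroup P₀] [Module R P₀] [AddCommGroup P₁] [Module R P₁] [AddCommGroup P₂] [Module R P₂]
    {d : P₂ →ₗ[R] P₁} {g : P₁ →ₗ[R] L} (f : L →ₗ[R] P₀) (hdg : Function.Exact d g)
    (hg : Function.Surjective g) :
    (∀ z : M ⊗[R] P₁, (f ∘ₗ g).lTensor M z = 0 → ∃ w, d.lTensor M w = c • z) ↔
      ∀ y : M ⊗[R] L, f.lTensor M y = 0 → c • y = 0 := by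
  rw [(LinearMap.lTensor_surjective M hg).forall]
  refine forall_congr' fun z => ?_
  rw [LinearMap.lTensor_comp_apply, ← map_smul, lTensor_exact M hdg hg (c • z), Set.mem_range]

lemma smul_eq_zero_of_lTensor_eq_zero {L L' P P' : Type*} [AddCommGroup L] [Module R L]
    [AddCommGroup L'] [Module R L'] [AddCommGroup P] [Module R P] [Module.Projective R P]
    [AddCommGroup P'] [Module R P'] [Module.Projective R P'] {f : L →ₗ[R] P} {g : P →ₗ[R] N}
    {f' : L' →ₗ[R] P'} {g' : P' →ₗ[R] N} (hf : Function.Injective f) (hfg : Function.Exact f g)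
    (hg : Function.Surjective g) (hf' : Function.Injective f') (hfg' : Function.Exact f' g')
    (hg' : Function.Surjective g') (h : ∀ y : M ⊗[R] L, f.lTensor M y = 0 → c • y = 0)
    {y : M ⊗[R] L'} (hy : f'.lTensor M y = 0) : c • y = 0 := by
  obtain ⟨a, ha⟩ := Module.projective_lifting_property g g' hg
  obtain ⟨b, hb⟩ := Module.projective_lifting_property g' g hg'
  replace ha (x) : g (a x) = g' x := LinearMap.congr_fun ha x
  replace hb (x) : g' (b x) = g x := LinearMap.congr_fun hb x
  let a₁ : L' →ₗ[R] L := (a ∘ₗ f').codRestrictOfInjective f hf fun x =>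
    (hfg _).mp ((ha _).trans (hfg'.apply_apply_eq_zero x))
  let b₁ : L →ₗ[R] L' := (b ∘ₗ f).codRestrictOfInjective f' hf' fun x =>
    (hfg' _).mp ((hb _).trans (hfg.apply_apply_eq_zero x))
  let k : P' →ₗ[R] L' := (b ∘ₗ a - LinearMap.id).codRestrictOfInjective f' hf' fun x =>
    (hfg' _).mp (by simp [ha, hb])
  have fa₁ : f ∘ₗ a₁ = a ∘ₗ f' := LinearMap.codRestrictOfInjective_comp ..
  have fb₁ : f' ∘ₗ b₁ = b ∘ₗ f := LinearMap.codRestrictOfInjective_comp ..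
  have fk : f' ∘ₗ k = b ∘ₗ a - LinearMap.id := LinearMap.codRestrictOfInjective_comp ..
  have homotopy : b₁ ∘ₗ a₁ - k ∘ₗ f' = LinearMap.id := by
    rw [← LinearMap.cancel_left hf', LinearMap.comp_sub, ← LinearMap.comp_assoc, fb₁,
      LinearMap.comp_assoc, fa₁, ← LinearMap.comp_assoc f' k, fk, LinearMap.sub_comp,
      LinearMap.comp_assoc]
    simp
  have hay : f.lTensor M (a₁.lTensor M y) = 0 := by
    rw [← LinearMap.lTensor_comp_apply, fa₁, LinearMap.lTensor_comp_apply, hy, map_zero]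
  calc c • y = c • (b₁ ∘ₗ a₁ - k ∘ₗ f').lTensor M y := by
        rw [homotopy, LinearMap.lTensor_id_apply]
    _ = b₁.lTensor M (c • a₁.lTensor M y) := by
      rw [LinearMap.lTensor_sub, LinearMap.sub_apply, LinearMap.lTensor_comp_apply,
        LinearMap.lTensor_comp_apply, hy, map_zero, sub_zero, map_smul]
    _ = 0 := by rw [h _ hay, map_zero]

lemma forall_tor_one_smul_eq_zero_iff {M N L P : Type u} [AddCommGroup M] [Module R M]
    [AddCommGroup N] [Module R N] [AddCommGroup L] [Module R L] [AddCommGroup P] [Module R P]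
    [Module.Projective R P] {f : L →ₗ[R] P} {g : P →ₗ[R] N} (hf : Function.Injective f)
    (hfg : Function.Exact f g) (hg : Function.Surjective g) :
    (∀ x : ((Tor (ModuleCat.{u} R) 1).obj (ModuleCat.of R M)).obj (ModuleCat.of R N),
      c • x = 0) ↔ ∀ y : M ⊗[R] L, f.lTensor M y = 0 → c • y = 0 := by
  let Q := projectiveResolution (ModuleCat.of R N)
  let π : Q.complex.X 0 →ₗ[R] N := (Q.π.f 0).hom
  have hπ : Function.Surjective π := (ModuleCat.epi_iff_surjective (Q.π.f 0)).mp inferInstance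
  have exact₀ : Function.Exact (Q.complex.d 1 0).hom π :=
    (ShortComplex.ShortExact.moduleCat_exact_iff_function_exact _).mp Q.exact₀
  have exact₁ : Function.Exact (Q.complex.d 2 1).hom (Q.complex.d 1 0).hom :=
    (ShortComplex.ShortExact.moduleCat_exact_iff_function_exact _).mp (Q.exact_succ 0)
  have : Module.Projective R (Q.complex.X 0) :=
    (IsProjective.iff_projective _).mpr (Q.projective 0)
  let d : Q.complex.X 1 →ₗ[R] LinearMap.ker π :=
    (Q.complex.d 1 0).hom.codRestrict _ exact₀.apply_apply_eq_zero
  have hd : Function.Surjective d := fun x =>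
    ((exact₀ x).mp x.2).imp fun _ => Subtype.ext
  have exact_d : Function.Exact (Q.complex.d 2 1).hom d := fun z =>
    Subtype.ext_iff.trans (exact₁ z)
  rw [forall_tor_one_smul_eq_zero_iff_projectiveResolution Q]
  refine (lTensor_comp_exists_iff (LinearMap.ker π).subtype exact_d hd).trans
    ⟨fun h y => ?_, fun h y => ?_⟩
  · exact smul_eq_zero_of_lTensor_eq_zero (Submodule.subtype_injective _)
      π.exact_subtype_ker_map hπ hf hfg hg h
  · exact smul_eq_zero_of_lTensor_eq_zero hf hfg hg (Submodule.subtype_injective _)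
      π.exact_subtype_ker_map hπ h

end Tor

section EquationalCriterion

variable {ι R M : Type*} [CommRing R] [AddCommGroup M] [Module R M]
  {p : (ι →₀ R) →ₗ[R] M} {c : R}

lemma exists_linearMap_rTensor_eq_smul {K : Submodule R (ι →₀ R)} (hc : c ∈ splitIdeal ⊥ K)
    {P : Type*} [AddCommGroup P] [Module R P] (t : K ⊗[R] P) :
    ∃ φ : (ι →₀ R) →ₗ[R] K, φ.rTensor P (K.subtype.rTensor P t) = c • t := by
  classical
  obtain ⟨s, rfl⟩ := TensorProduct.exists_finset t
  obtain ⟨φ, hφ⟩ := mem_splitIdeal_bot.mp hc (s.image Prod.fst)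
  refine ⟨φ, ?_⟩
  simp only [map_sum, LinearMap.rTensor_tmul, Submodule.subtype_apply, Finset.smul_sum]
  exact Finset.sum_congr rfl fun x hx => by
    rw [hφ _ (Finset.mem_image_of_mem _ hx), TensorProduct.smul_tmul']

lemma smul_eq_zero_of_exists_linearMap_rTensor_eq_smul {F L P : Type*} [AddCommGroup F]
    [Module R F] [Module.Flat R F] [AddCommGroup L] [Module R L] [AddCommGroup P] [Module R P]
    {q : F →ₗ[R] M} (hq : Function.Surjective q)
    (h : ∀ t : LinearMap.ker q ⊗[R] P, ∃ φ : F →ₗ[R] LinearMap.ker q,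
      φ.rTensor P ((LinearMap.ker q).subtype.rTensor P t) = c • t)
    {f : L →ₗ[R] P} (hf : Function.Injective f) {y : M ⊗[R] L} (hy : f.lTensor M y = 0) :
    c • y = 0 := by
  obtain ⟨y, rfl⟩ := LinearMap.rTensor_surjective L hq y
  rw [← LinearMap.comp_apply, LinearMap.lTensor_comp_rTensor, ← LinearMap.rTensor_comp_lTensor,
    LinearMap.comp_apply] at hy
  obtain ⟨t, ht⟩ := (rTensor_exact P q.exact_subtype_ker_map hq _).mp hy
  obtain ⟨φ, hφ⟩ := h t
  let ψ : F →ₗ[R] F := (LinearMap.ker q).subtype ∘ₗ φ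
  have hψ : ψ.rTensor L y = c • y := by
    apply Module.Flat.lTensor_preserves_injective_linearMap (M := F) f hf
    rw [← LinearMap.comp_apply, LinearMap.lTensor_comp_rTensor, ← LinearMap.rTensor_comp_lTensor,
      LinearMap.comp_apply, ← ht, LinearMap.rTensor_comp_apply, hφ, map_smul, map_smul, ht]
  have hqψ : q ∘ₗ ψ = 0 := LinearMap.ext fun x => (φ x).2
  rw [← map_smul, ← hψ, ← LinearMap.rTensor_comp_apply, hqψ, LinearMap.rTensor_zero,
    LinearMap.zero_apply]

lemma linearCombination_eq_sum_of_support_subset (w : ι → M) {x : ι →₀ R} {E : Finset ι}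
    (hx : x.support ⊆ E) : Finsupp.linearCombination R w x = ∑ i : E, x i • w i := by
  rw [Finsupp.linearCombination_apply, Finsupp.sum_of_support_subset x hx _ (by simp),
    ← Finset.sum_coe_sort]

lemma exists_smul_eq_sum_of_relations {E X : Type*} [Fintype E] [Finite X] {e : E → M}
    {r : E → X → R} (he : ∀ x, ∑ i, r i x • e i = 0)
    (h : ∀ (L : Submodule R (X → R)) (y : M ⊗[R] L), L.subtype.lTensor M y = 0 → c • y = 0) :
    ∃ (k : ℕ) (a : E → Fin k → R) (y : Fin k → M),
      (∀ i, c • e i = ∑ j, a i j • y j) ∧ ∀ j x, ∑ i, a i j * r i x = 0 := by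
  classical
  have := Fintype.ofFinite X
  let L : Submodule R (X → R) := Submodule.span R (Set.range r)
  let r' (i : E) : L := ⟨r i, Submodule.subset_span ⟨i, rfl⟩⟩
  have span_r' : Submodule.span R (Set.range r') = ⊤ :=
    Submodule.map_injective_of_injective L.subtype_injective <| by
      rw [Submodule.map_span, ← Set.range_comp, Submodule.map_subtype_top]
      rfl
  have hy : L.subtype.lTensor M (∑ i, e i ⊗ₜ r' i) = 0 := by
    have r_eq (i) : r i = ∑ x, r i x • Pi.single x 1 := by
      simpa [← Pi.single_smul] using (Finset.univ_sum_single (r i)).symm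
    calc L.subtype.lTensor M (∑ i, e i ⊗ₜ r' i)
      _ = ∑ i, e i ⊗ₜ[R] ∑ x, r i x • Pi.single x 1 := by simp [r', ← r_eq]
      _ = ∑ x, (∑ i, r i x • e i) ⊗ₜ Pi.single x 1 := by
        simp_rw [TensorProduct.tmul_sum, TensorProduct.sum_tmul, TensorProduct.tmul_smul,
          TensorProduct.smul_tmul']
        exact Finset.sum_comm
      _ = 0 := by simp [he]
  have hcy : ∑ i, r' i ⊗ₜ[R] (c • e i) = 0 := by
    simpa [Finset.smul_sum] using congrArg (TensorProduct.comm R M L) (h L _ hy)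
  obtain ⟨k, a, y, hay, har⟩ :=
    TensorProduct.vanishesTrivially_of_sum_tmul_eq_zero R span_r' hcy
  refine ⟨k, a, y, hay, fun j x => ?_⟩
  have := congrFun (congrArg Subtype.val (har j)) x
  simpa [r'] using this

lemma mem_splitIdeal_ker_of_forall_smul_eq_zero (hp : Function.Surjective p)
    (h : ∀ (X : Finset (LinearMap.ker p)) (L : Submodule R (X → R)) (y : M ⊗[R] L),
      L.subtype.lTensor M y = 0 → c • y = 0) : c ∈ splitIdeal ⊥ (LinearMap.ker p) := by
  classical
  refine mem_splitIdeal_bot.mpr fun X => ?_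
  let E : Finset ι := X.biUnion fun x => (x : ι →₀ R).support
  have support_subset (x : X) : (x : ι →₀ R).support ⊆ E :=
    Finset.subset_biUnion_of_mem (fun x : LinearMap.ker p => (x : ι →₀ R).support) x.2
  let e (i : ι) : ι →₀ R := Finsupp.single i 1
  have sum_e (x : X) : ∑ i : E, (x : ι →₀ R) i • e i = x := by
    rw [← linearCombination_eq_sum_of_support_subset e (support_subset x)]
    simp [e, Finsupp.linearCombination_apply]
  obtain ⟨k, a, y, hay, har⟩ := exists_smul_eq_sum_of_relations (e := fun i : E => p (e i))
    (r := fun i (x : X) => (x : ι →₀ R) i)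
    (fun x => by simp only [← map_smul, ← map_sum, sum_e, LinearMap.map_coe_ker]) (h X)
  choose z hz using fun j => hp (y j)
  let g (i : E) : LinearMap.ker p :=
    ⟨c • e i - ∑ j, a i j • z j, by simp [hz, ← hay]⟩
  refine ⟨Finsupp.linearCombination R (Function.extend (↑) g 0), fun x hx => Subtype.ext ?_⟩
  have relation_z : ∑ i : E, (x : ι →₀ R) i • ∑ j, a i j • z j = 0 := by
    simp_rw [Finset.smul_sum, smul_smul]
    rw [Finset.sum_comm]
    exact Finset.sum_eq_zero fun j _ => by
      rw [← Finset.sum_smul, ← zero_smul R (z j), ← har j ⟨x, hx⟩]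
      simp_rw [mul_comm]
  calc (Finsupp.linearCombination R (Function.extend (↑) g 0) (x : ι →₀ R) : ι →₀ R)
    _ = ∑ i : E, (x : ι →₀ R) i • (c • e i - ∑ j, a i j • z j) := by
      have := linearCombination_eq_sum_of_support_subset (Function.extend (↑) g 0)
        (support_subset ⟨x, hx⟩)
      simp [this, g]
    _ = c • ∑ i : E, (x : ι →₀ R) i • e i := by
      simp_rw [smul_sub, Finset.sum_sub_distrib, relation_z, sub_zero, Finset.smul_sum,
        smul_comm c]
    _ = c • x := by rw [sum_e ⟨x, hx⟩]

end EquationalCriterion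

section AlmostFlat

variable {V : Type v} [CommRing V] {m : Ideal V} {R : Type u} [CommRing R] [Algebra V R]
  {M : Type u} [AddCommGroup M] [Module R M]

theorem isAlmostFlat_iff {ι : Type u} {p : (ι →₀ R) →ₗ[R] M} (hp : Function.Surjective p) :
    IsAlmostFlat V m R M ↔ m ≤ (splitIdeal ⊥ (LinearMap.ker p)).comap (algebraMap V R) := by
  refine ⟨fun h a ha => ?_, fun h N a ha => ?_⟩
  · refine mem_splitIdeal_ker_of_forall_smul_eq_zero hp fun X L => ?_
    exact (forall_tor_one_smul_eq_zero_iff L.subtype_injective (LinearMap.exact_subtype_mkQ L)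
      L.mkQ_surjective).mp (h _ a ha)
  · let q := Finsupp.linearCombination R (id : N → N)
    have hq : Function.Surjective q := Finsupp.linearCombination_id_surjective R N
    exact (forall_tor_one_smul_eq_zero_iff (L := LinearMap.ker q)
      (LinearMap.ker q).subtype_injective q.exact_subtype_ker_map hq).mpr fun y =>
        smul_eq_zero_of_exists_linearMap_rTensor_eq_smul (L := LinearMap.ker q) hp
          (exists_linearMap_rTensor_eq_smul (h ha)) (LinearMap.ker q).subtype_injective

variable {S : Type*} [CommRing S] [Algebra R S]

lemma linearCombination_one_tmul_surjective :
    Function.Surjective (Finsupp.linearCombination S fun x : M => (1 : S) ⊗ₜ[R] x) := by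
  intro t
  induction t with
  | zero => exact ⟨0, map_zero _⟩
  | tmul s x => exact ⟨Finsupp.single x s, by simp [TensorProduct.smul_tmul']⟩
  | add t u ht hu =>
    obtain ⟨x, rfl⟩ := ht
    obtain ⟨y, rfl⟩ := hu
    exact ⟨x + y, map_add _ x y⟩

lemma linearCombination_coordMap (x : M →₀ R) :
    Finsupp.linearCombination S (fun x : M => (1 : S) ⊗ₜ[R] x) (coordMap M R S x) =
      1 ⊗ₜ Finsupp.linearCombination R (id : M → M) x := by
  induction x using Finsupp.induction_linear with
  | zero => simp
  | add x y hx hy => rw [map_add, map_add, hx, hy, map_add, TensorProduct.tmul_add]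
  | single x r => simp [coordMap_single]

lemma ker_linearCombination_one_tmul :
    LinearMap.ker (Finsupp.linearCombination S fun x : M => (1 : S) ⊗ₜ[R] x) =
      scalarExt S (LinearMap.ker (Finsupp.linearCombination R (id : M → M))) := by
  set K := LinearMap.ker (Finsupp.linearCombination R (id : M → M)) with hK
  apply le_antisymm
  · let π := (scalarExt S K).mkQ
    have π_coordMap {x : M →₀ R} (hx : x ∈ K) : π (coordMap M R S x) = 0 :=
      (Submodule.Quotient.mk_eq_zero _).mpr (coordMap_mem_scalarExt hx)
    let l : M →ₗ[R] (M →₀ S) ⧸ scalarExt S K :=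
      { toFun x := π (Finsupp.single x 1)
        map_add' x y := by
          have := π_coordMap (x := .single (x + y) 1 - .single x 1 - .single y 1) (by simp [hK])
          simpa [coordMap_single, sub_sub, sub_eq_zero] using this
        map_smul' r x := by
          have := π_coordMap (x := .single (r • x) 1 - r • .single x 1) (by simp [hK])
          simpa [coordMap_single, sub_eq_zero, Algebra.algebraMap_eq_smul_one,
            ← π.map_smul_of_tower r] using this }
    have hl : l.liftBaseChange S ∘ₗ
        Finsupp.linearCombination S (fun x : M => (1 : S) ⊗ₜ[R] x) = π :=
      Finsupp.lhom_ext' fun x => LinearMap.ext_ring (by simp [l])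
    intro x hx
    rw [← Submodule.Quotient.mk_eq_zero, ← Submodule.mkQ_apply]
    exact (LinearMap.congr_fun hl x).symm.trans ((congrArg _ hx).trans (map_zero _))
  · refine Submodule.span_le.mpr ?_
    rintro _ ⟨x, hx, rfl⟩
    rw [SetLike.mem_coe, LinearMap.mem_ker, linearCombination_coordMap, LinearMap.mem_ker.mp hx,
      TensorProduct.tmul_zero]

end AlmostFlat

section Descent

variable {ι R S : Type*} [CommRing R] [CommRing S] [Algebra R S]

lemma mem_splitIdeal_of_mem_splitIdeal_scalarExt {I : Ideal S} {J : Ideal R}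
    {K : Submodule R (ι →₀ R)} {a : S} (ρ : S →ₗ[R] R) (hρ : ∀ s ∈ I, ρ s ∈ J)
    (ha : a ∈ splitIdeal I (scalarExt S K)) : ρ a ∈ splitIdeal J K := by
  classical
  let P : (ι →₀ S) →ₗ[R] (ι →₀ R) := Finsupp.mapRange.linearMap ρ
  have P_smul_coordMap (s : S) (y : ι →₀ R) : P (s • coordMap ι R S y) = ρ s • y := by
    ext i
    simp [P, coordMap_apply, mul_comm s, ← Algebra.smul_def, mul_comm (y i)]
  have P_mem (z) (hz : z ∈ scalarExt S K) : P z ∈ K := by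
    induction hz using Submodule.closure_induction with
    | zero => simp
    | add x y _ _ hx hy => exact map_add P x y ▸ add_mem hx hy
    | smul_mem s _ h =>
      obtain ⟨y, hy, rfl⟩ := h
      exact P_smul_coordMap s y ▸ K.smul_mem _ hy
  intro X
  obtain ⟨φ, hφ⟩ := ha
    (X.image fun x : K => ⟨coordMap ι R S x, coordMap_mem_scalarExt x.2⟩)
  let φR : (ι →₀ R) →ₗ[R] ι →₀ R :=
    P ∘ₗ ((scalarExt S K).subtype ∘ₗ φ).restrictScalars R ∘ₗ coordMap ι R S
  refine ⟨φR.codRestrict K fun x => P_mem _ (φ _).2, fun x hx i => ?_⟩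
  convert hρ _ (hφ _ (Finset.mem_image_of_mem _ hx) i) using 1
  rw [← P_smul_coordMap]
  exact (map_sub ρ _ _).symm

lemma linearCombination_apply_mem_mul {I J : Ideal S} {x : ι →₀ S} {v : ι → ι →₀ S}
    (hx : ∀ i, x i ∈ I) (hv : ∀ i j, v i j ∈ J) (j : ι) :
    Finsupp.linearCombination S v x j ∈ I * J := by
  rw [Finsupp.linearCombination_apply, Finsupp.sum, Finsupp.finsetSum_apply]
  exact Ideal.sum_mem _ fun i _ => Ideal.mul_mem_mul (hx i) (hv i j)

lemma exists_mem_smul_sub_coordMap_mem {J : Ideal S} {b : R}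
    (hb : ∀ s : S, ∃ r : R, b • s - algebraMap R S r ∈ J) {K : Submodule R (ι →₀ R)}
    {z : ι →₀ S} (hz : z ∈ scalarExt S K) :
    ∃ k : K, ∀ j, (b • z - coordMap ι R S k) j ∈ J := by
  induction hz using Submodule.closure_induction with
  | zero => exact ⟨0, by simp⟩
  | add x y _ _ hx hy =>
    obtain ⟨k, hk⟩ := hx
    obtain ⟨l, hl⟩ := hy
    refine ⟨k + l, fun j => ?_⟩
    convert J.add_mem (hk j) (hl j) using 1
    simp only [smul_add, Submodule.coe_add, map_add, Finsupp.sub_apply, Finsupp.add_apply]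
    ring
  | smul_mem s _ h =>
    obtain ⟨y, hy, rfl⟩ := h
    obtain ⟨r, hr⟩ := hb s
    refine ⟨r • ⟨y, hy⟩, fun j => ?_⟩
    convert J.mul_mem_right (algebraMap R S (y j)) hr using 1
    simp [coordMap_apply, sub_mul, Algebra.smul_def r]

lemma exists_linearMap_smul_sub_coordMap_mem_mul {J : Ideal S} {b : R}
    (hb : ∀ s : S, ∃ r : R, b • s - algebraMap R S r ∈ J) {K : Submodule R (ι →₀ R)}
    (θ : (ι →₀ S) →ₗ[S] scalarExt S K) :
    ∃ ψ : (ι →₀ R) →ₗ[R] K, ∀ (I : Ideal S) (y : ι →₀ R), (∀ i, coordMap ι R S y i ∈ I) →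
      ∀ j, (b • (θ (coordMap ι R S y) : ι →₀ S) - coordMap ι R S (ψ y)) j ∈ I * J := by
  choose k hk using fun i : ι =>
    exists_mem_smul_sub_coordMap_mem hb (θ (Finsupp.single i 1)).2
  refine ⟨Finsupp.linearCombination R k, fun I y hy j => ?_⟩
  convert linearCombination_apply_mem_mul hy hk j using 2
  clear hy
  induction y using Finsupp.induction_linear with
  | zero => simp
  | add x y hx hy => simp only [map_add, ← hx, ← hy, Submodule.coe_add, smul_add]; abel
  | single i r =>
    rw [coordMap_single, ← Finsupp.smul_single_one i, map_smul]
    simp [smul_sub, smul_comm b]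

lemma mul_mem_splitIdeal_mul {I J : Ideal S} {a b c : R} {K : Submodule R (ι →₀ R)}
    (hb : ∀ s : S, ∃ r : R, b • s - algebraMap R S r ∈ J)
    (hc : algebraMap R S c ∈ splitIdeal ⊥ (scalarExt S K))
    (ha : a ∈ splitIdeal (I.comap (algebraMap R S)) K) :
    b * c * a ∈ splitIdeal ((I * J).comap (algebraMap R S)) K := by
  classical
  intro X
  obtain ⟨φ, hφ⟩ := ha X
  let δ (x : K) : K := φ x - a • x
  obtain ⟨θ, hθ⟩ := mem_splitIdeal_bot.mp hc
    (X.image fun x => ⟨coordMap ι R S (δ x), coordMap_mem_scalarExt (δ x).2⟩)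
  obtain ⟨ψ, hψ⟩ := exists_linearMap_smul_sub_coordMap_mem_mul hb θ
  refine ⟨(b * c) • φ + ψ ∘ₗ (a • LinearMap.id - K.subtype ∘ₗ φ), fun x hx j => ?_⟩
  have hθx : (θ (coordMap ι R S (δ x)) : ι →₀ S) = c • coordMap ι R S (δ x) := by
    rw [hθ _ (Finset.mem_image_of_mem _ hx)]
    simp
  have hψx := hψ I (δ x) (fun i => hφ x hx i) j
  rw [hθx, smul_smul, ← map_smul, ← map_sub, coordMap_apply] at hψx
  rw [Ideal.mem_comap]
  convert hψx using 3
  simp only [δ, LinearMap.add_apply, LinearMap.smul_apply, LinearMap.comp_apply,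
    LinearMap.sub_apply, LinearMap.id_apply, Submodule.subtype_apply, map_sub, map_smul,
    Submodule.coe_add, Submodule.coe_sub, Submodule.coe_smul]
  module

end Descent

section SplittingRoots

open Polynomial

lemma exists_linearMap_map_one_eq_one (R T : Type*) [CommRing R] [Ring T] [Algebra R T]
    [Module.Free R T] [Nontrivial T] : ∃ ρ : T →ₗ[R] R, ρ 1 = 1 := by
  let b := Module.Free.chooseBasis R T
  obtain ⟨i⟩ := b.index_nonempty
  exact ⟨b.coord i ∘ₗ LinearMap.mulLeft R (b i), by simp⟩

lemma exists_eq_prod_X_sub_C_of_splits {R : Type*} [CommRing R] {p : R[X]} {d : ℕ}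
    (hs : p.Splits) (hp : p.Monic) (hd : p.natDegree = d) :
    ∃ r : Fin d → R, p = ∏ j, (X - C (r j)) := by
  nontriviality R
  obtain ⟨m, hm⟩ := splits_iff_exists_multiset.mp hs
  rw [hp.leadingCoeff, C_1, one_mul] at hm
  have hcard : m.toList.length = d := by
    rw [Multiset.length_toList, ← hd, hm, natDegree_multiset_prod_X_sub_C_eq_card]
  subst hcard
  refine ⟨m.toList.get, ?_⟩
  rw [hm, ← List.prod_ofFn]
  conv_lhs => rw [← m.coe_toList, Multiset.map_coe, Multiset.prod_coe, ← List.ofFn_get m.toList,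
    List.map_ofFn]
  rfl

lemma exists_free_splits {κ : Type*} {R : Type u} [CommRing R] [Nontrivial R] (p : κ → R[X])
    (hp : ∀ i, (p i).Monic) (s : Finset κ) :
    ∃ (T : Type u) (_ : CommRing T) (_ : Algebra R T) (_ : Module.Free R T) (_ : Nontrivial T),
      ∀ i ∈ s, ((p i).map (algebraMap R T)).Splits := by
  classical
  induction s using Finset.induction_on with
  | empty => exact ⟨R, inferInstance, inferInstance, inferInstance, inferInstance, by simp⟩
  | insert k s _ ih =>
    obtain ⟨T, _, _, _, _, hT⟩ := ih
    obtain ⟨U, _, _, _, _, _, hU⟩ := ((hp k).map (algebraMap R T)).exists_splits_map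
    algebraize [(algebraMap T U).comp (algebraMap R T)]
    refine ⟨U, inferInstance, inferInstance, .trans (S := T), inferInstance, ?_⟩
    simp only [IsScalarTower.algebraMap_eq R T U, ← Polynomial.map_map]
    exact (Finset.forall_mem_insert _ _ _).mpr ⟨hU, fun i hi => (hT i hi).map _⟩

lemma exists_free_eq_prod_X_sub_C {κ : Type*} [Finite κ] {R : Type u} [CommRing R] [Nontrivial R]
    {d : ℕ} (p : κ → R[X]) (hp : ∀ i, (p i).Monic) (hd : ∀ i, (p i).natDegree = d) :
    ∃ (T : Type u) (_ : CommRing T) (_ : Algebra R T) (_ : Module.Free R T) (_ : Nontrivial T)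
      (r : κ → Fin d → T), ∀ i, (p i).map (algebraMap R T) = ∏ j, (X - C (r i j)) := by
  have := Fintype.ofFinite κ
  obtain ⟨T, _, _, _, _, hT⟩ := exists_free_splits p hp Finset.univ
  choose r hr using fun i => exists_eq_prod_X_sub_C_of_splits (hT i (Finset.mem_univ i))
    ((hp i).map _) (((hp i).natDegree_map _).trans (hd i))
  exact ⟨T, _, _, inferInstance, inferInstance, r, hr⟩

-- Expanding, a product of one factor `I (g j) (j (g j))` for each `j` vanishes: some `i` has
-- `g` equal to `i` on functions `j` realising every value `k = j i`, since otherwise choosing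
-- for each `i` a missed value `k i` contradicts itself at `j = k`.
lemma prod_sum_ideal_eq_bot {κ δ S : Type*} [Fintype κ] [DecidableEq κ] [Fintype δ] [CommRing S]
    (I : κ → δ → Ideal S) (h : ∀ i, ∏ k, I i k = ⊥) :
    ∏ j : κ → δ, ∑ i, I i (j i) = ⊥ := by
  classical
  rw [Finset.prod_univ_sum, eq_bot_iff, ← Ideal.zero_eq_bot, Ideal.sum_eq_sup]
  refine Finset.sup_le fun g _ => ?_
  obtain ⟨i, hi⟩ : ∃ i, ∀ k, ∃ j : κ → δ, g j = i ∧ j i = k := by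
    by_contra! hcon
    choose k hk using hcon
    exact hk (g k) k rfl rfl
  choose J hgJ hJ using hi
  have hinj : Function.Injective J := fun a b hab => by rw [← hJ a, ← hJ b, hab]
  rw [Ideal.zero_eq_bot, ← h i, ← Finset.prod_mul_prod_compl (Finset.univ.image J)]
  refine Ideal.mul_le_left.trans ?_
  rw [Finset.prod_image hinj.injOn]
  exact (Finset.prod_congr rfl fun k _ => by rw [hgJ k, hJ k]).le

variable {R S : Type*} [CommRing R] [CommRing S] [Algebra R S]

lemma exists_monic_aeval_smul_eq_zero [Nontrivial R] {n : ℕ} {e : Fin n → S} {c : R}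
    (hc : ∀ s : S, c • s ∈ Submodule.span R (Set.range e)) (i : Fin n) :
    ∃ p : R[X], p.Monic ∧ p.natDegree = n + 1 ∧ aeval (c • e i) p = 0 := by
  choose A hA using fun k => (Submodule.mem_span_range_iff_exists_fun R).mp (hc (e i * e k))
  let N : Matrix (Fin n) (Fin n) S :=
    Matrix.scalar (Fin n) (c • e i) - (Matrix.of A).map (algebraMap R S)
  have mulVec_eq_zero : N.mulVec e = 0 := by
    ext k
    have hAk : ((Matrix.of A).map (algebraMap R S)).mulVec e k = c • (e i * e k) := by
      simp [Matrix.mulVec, dotProduct, ← Algebra.smul_def, hA]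
    simp [N, Matrix.sub_mulVec, hAk]
  have det_mul_eq_zero (k : Fin n) : N.det * e k = 0 := by
    simpa [Matrix.mulVec_mulVec, Matrix.adjugate_mul, Matrix.smul_mulVec] using
      congrFun (congrArg N.adjugate.mulVec mulVec_eq_zero) k
  refine ⟨X * (Matrix.of A).charpoly, monic_X.mul (Matrix.charpoly_monic _), ?_, ?_⟩
  · rw [monic_X.natDegree_mul (Matrix.charpoly_monic _), natDegree_X,
      Matrix.charpoly_natDegree_eq_dim, Fintype.card_fin, add_comm]
  · rw [map_mul, aeval_X, aeval_def, ← Polynomial.eval_map, ← Matrix.charpoly_map,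
      Matrix.eval_charpoly, smul_mul_assoc, mul_comm (e i), det_mul_eq_zero, smul_zero]

end SplittingRoots

section AlmostFinite

variable {ι S : Type*} {R : Type u} [CommRing R] [CommRing S] [Algebra R S]

lemma exists_pow_two_smul_sub_mem_sum_span {κ : Type*} [Fintype κ] {e : κ → S} {c : R} (r : κ → R)
    (hc : ∀ s : S, c • s ∈ Submodule.span R (Set.range e)) (s : S) :
    ∃ t : R, c ^ 2 • s - algebraMap R S t ∈
      ∑ i, Ideal.span {c • e i - algebraMap R S (r i)} := by
  obtain ⟨a, ha⟩ := (Submodule.mem_span_range_iff_exists_fun R).mp (hc s)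
  refine ⟨∑ i, a i * r i, ?_⟩
  have key : c ^ 2 • s - algebraMap R S (∑ i, a i * r i) =
      ∑ i, algebraMap R S (a i) * (c • e i - algebraMap R S (r i)) := by
    rw [pow_two, mul_smul, ← ha, Finset.smul_sum, map_sum, ← Finset.sum_sub_distrib]
    simp [mul_sub, Algebra.smul_def (a _)]
  rw [key]
  refine Ideal.sum_mem _ fun i _ => Ideal.mul_mem_left _ _ ?_
  rw [Ideal.sum_eq_sup]
  exact Finset.le_sup (f := fun i => Ideal.span {c • e i - algebraMap R S (r i)})
    (Finset.mem_univ i) (Ideal.mem_span_singleton_self _)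

lemma pow_mem_splitIdeal_of_prod_eq_zero {n d : ℕ} {e : Fin n → S} {c : R}
    (hc : ∀ s : S, c • s ∈ Submodule.span R (Set.range e)) (r : Fin n → Fin d → R)
    (hr : ∀ i, ∏ j, (c • e i - algebraMap R S (r i j)) = 0) {K : Submodule R (ι →₀ R)}
    (hK : algebraMap R S c ∈ splitIdeal ⊥ (scalarExt S K)) :
    c ^ (3 * d ^ n) ∈ splitIdeal (RingHom.ker (algebraMap R S)) K := by
  classical
  let J (j : Fin n → Fin d) : Ideal S := ∑ i, Ideal.span {c • e i - algebraMap R S (r i (j i))}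
  have prod_J : ∏ j, J j = ⊥ :=
    prod_sum_ideal_eq_bot (fun i k => Ideal.span {c • e i - algebraMap R S (r i k)}) fun i => by
      rw [Ideal.prod_span_singleton, hr, Ideal.span_singleton_eq_bot]
  have key (s : Finset (Fin n → Fin d)) :
      c ^ (3 * s.card) ∈ splitIdeal ((∏ j ∈ s, J j).comap (algebraMap R S)) K := by
    induction s using Finset.induction_on with
    | empty => simp [splitIdeal_top]
    | insert j s hj ih =>
      rw [Finset.prod_insert hj, mul_comm, Finset.card_insert_of_notMem hj]
      convert mul_mem_splitIdeal_mul (exists_pow_two_smul_sub_mem_sum_span (fun i => r i (j i)) hc)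
        hK ih using 1
      ring
  simpa [prod_J, RingHom.ker] using key Finset.univ

section BaseChange

variable {T : Type*} [CommRing T] [Algebra R T]

lemma algebraMap_smul_tmul_mem_span {κ : Type*} {e : κ → S} {c : R}
    (hc : ∀ s : S, c • s ∈ Submodule.span R (Set.range e)) (z : T ⊗[R] S) :
    algebraMap R T c • z ∈ Submodule.span T (Set.range fun i => (1 : T) ⊗ₜ[R] e i) := by
  change _ ∈ Submodule.span T (Set.range (TensorProduct.mk R T S 1 ∘ e))
  rw [Set.range_comp, ← Submodule.baseChange_span]
  induction z with
  | zero => simp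
  | add x y hx hy => exact smul_add (algebraMap R T c) x y ▸ add_mem hx hy
  | tmul t s =>
    rw [algebraMap_smul, ← TensorProduct.tmul_smul]
    exact Submodule.tmul_mem_baseChange_of_mem t (hc s)

lemma algebraMap_linearMap_eq_zero_of_tmul_one_eq_zero (ρ : T →ₗ[R] R) {t : T}
    (ht : algebraMap T (T ⊗[R] S) t = 0) : algebraMap R S (ρ t) = 0 := by
  rw [Algebra.TensorProduct.algebraMap_apply] at ht
  simpa [Algebra.smul_def] using congrArg (TensorProduct.lid R S ∘ ρ.rTensor S) ht

lemma smul_eq_zero_of_algebraMap_tensorProduct_eq_zero [Module.Free R T] {c : R}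
    (hc : ∀ x ∈ RingHom.ker (algebraMap R S), c * x = 0) {t : T}
    (ht : algebraMap T (T ⊗[R] S) t = 0) : c • t = 0 := by
  refine (Module.forall_dual_apply_eq_zero_iff R _).mp fun ρ => ?_
  rw [map_smul]
  exact hc _ (algebraMap_linearMap_eq_zero_of_tmul_one_eq_zero ρ ht)

lemma algebraMap_mem_splitIdeal_scalarExt_tensorProduct {K : Submodule R (ι →₀ R)} {a : R}
    (ha : algebraMap R S a ∈ splitIdeal ⊥ (scalarExt S K)) :
    algebraMap T (T ⊗[R] S) (algebraMap R T a) ∈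
      splitIdeal ⊥ (scalarExt (T ⊗[R] S) (scalarExt T K)) := by
  let := Algebra.TensorProduct.rightAlgebra (R := R) (A := T) (B := S)
  rw [scalarExt_scalarExt, ← scalarExt_scalarExt (T := S), ← IsScalarTower.algebraMap_apply,
    IsScalarTower.algebraMap_apply R S]
  exact algebraMap_mem_splitIdeal_scalarExt ha

end BaseChange

-- Pass to a free extension of `R` over which the monic polynomials killing the `c • e i` split; an
-- `R`-linear retraction of the extension brings the conclusion back to `R`.
open Polynomial in
lemma pow_mem_splitIdeal_bot {n : ℕ} {e : Fin n → S} {c : R}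
    (hc : ∀ s : S, c • s ∈ Submodule.span R (Set.range e))
    (hker : ∀ x ∈ RingHom.ker (algebraMap R S), c * x = 0) {K : Submodule R (ι →₀ R)}
    (hK : algebraMap R S c ∈ splitIdeal ⊥ (scalarExt S K)) :
    c ^ (3 * (n + 1) ^ n + 1) ∈ splitIdeal ⊥ K := by
  cases subsingleton_or_nontrivial R
  · simp [Subsingleton.elim (splitIdeal ⊥ K) ⊤]
  choose p hp hpd hpe using exists_monic_aeval_smul_eq_zero hc
  obtain ⟨T, _, _, _, _, r, hr⟩ := exists_free_eq_prod_X_sub_C p hp hpd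
  obtain ⟨ρ, hρ⟩ := exists_linearMap_map_one_eq_one R T
  have hprod (i) : ∏ j, (algebraMap R T c • ((1 : T) ⊗ₜ[R] e i) -
      algebraMap T (T ⊗[R] S) (r i j)) = 0 := by
    have h := congrArg (Algebra.TensorProduct.includeRight : S →ₐ[R] T ⊗[R] S) (hpe i)
    rw [map_zero, ← aeval_algHom_apply, ← aeval_map_algebraMap T, hr, map_prod] at h
    simpa using h
  have hT := pow_mem_splitIdeal_of_prod_eq_zero (algebraMap_smul_tmul_mem_span hc) r hprod
    (algebraMap_mem_splitIdeal_scalarExt_tensorProduct hK)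
  have hR := mem_splitIdeal_of_mem_splitIdeal_scalarExt ρ (J := RingHom.ker (algebraMap R S))
    (fun t ht => algebraMap_linearMap_eq_zero_of_tmul_one_eq_zero ρ ht) hT
  rw [← map_pow, Algebra.algebraMap_eq_smul_one, map_smul, hρ, smul_eq_mul, mul_one] at hR
  rw [pow_succ']
  exact mul_mem_splitIdeal (J := ⊥) hker hR

end AlmostFinite

section PolynomialTrick

variable {ι κ R S : Type*} [CommRing R] [CommRing S] [Algebra R S]

lemma linearMap_sum_smul_pow_mem_splitIdeal {T : Type u} [CommRing T] [Algebra R T]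
    [Module.Free R T] [Fintype κ] {n : ℕ} {e : Fin n → S} {a : κ → R}
    (ha : ∀ i (s : S), a i • s ∈ Submodule.span R (Set.range e))
    (hker : ∀ i, ∀ x ∈ RingHom.ker (algebraMap R S), a i * x = 0) {K : Submodule R (ι →₀ R)}
    (hK : ∀ i, algebraMap R S (a i) ∈ splitIdeal ⊥ (scalarExt S K)) (t : κ → T) (ρ : T →ₗ[R] R) :
    ρ ((∑ i, a i • t i) ^ (3 * (n + 1) ^ n + 1)) ∈ splitIdeal ⊥ K := by
  have smul_mem (z : T ⊗[R] S) :
      (∑ i, a i • t i) • z ∈ Submodule.span T (Set.range fun i => (1 : T) ⊗ₜ[R] e i) := by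
    rw [Finset.sum_smul]
    refine sum_mem fun i _ => ?_
    rw [smul_assoc, smul_comm, ← algebraMap_smul T (a i)]
    exact Submodule.smul_mem _ _ (algebraMap_smul_tmul_mem_span (ha i) z)
  have mul_ker (x) (hx : x ∈ RingHom.ker (algebraMap T (T ⊗[R] S))) :
      (∑ i, a i • t i) * x = 0 := by
    simp [Finset.sum_mul, mul_comm (t _),
      smul_eq_zero_of_algebraMap_tensorProduct_eq_zero (hker _) hx, ← smul_mul_assoc]
  have algebraMap_mem : algebraMap T (T ⊗[R] S) (∑ i, a i • t i) ∈
      splitIdeal ⊥ (scalarExt (T ⊗[R] S) (scalarExt T K)) := by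
    rw [map_sum]
    refine sum_mem fun i _ => ?_
    rw [Algebra.smul_def, map_mul]
    exact Ideal.mul_mem_right _ _ (algebraMap_mem_splitIdeal_scalarExt_tensorProduct (hK i))
  exact mem_splitIdeal_of_mem_splitIdeal_scalarExt ρ (by simp)
    (pow_mem_splitIdeal_bot smul_mem mul_ker algebraMap_mem)

lemma exists_perm_comp_eq_of_sum_single_eq [Fintype κ] {f g : κ → ι}
    (h : ∑ k, Finsupp.single (f k) 1 = ∑ k, Finsupp.single (g k) 1) :
    ∃ σ : Equiv.Perm κ, g ∘ σ = f := by
  classical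
  have card_fiber (f : κ → ι) (i : ι) :
      (∑ k, Finsupp.single (f k) 1) i = Fintype.card {k // f k = i} := by
    simp [Finsupp.finsetSum_apply, Finsupp.single_apply, Fintype.card_subtype]
  exact ⟨Equiv.ofFiberEquiv fun i => Fintype.equivOfCardEq (by rw [← card_fiber, h, card_fiber]),
    funext (Equiv.ofFiberEquiv_map _)⟩

open MvPolynomial in
lemma sum_smul_X_pow [Fintype κ] (a : κ → R) (q : ℕ) :
    (∑ i, a i • (X i : MvPolynomial κ R)) ^ q =
      ∑ f : Fin q → κ, (∏ k, a (f k)) • monomial (∑ k, Finsupp.single (f k) 1) 1 := by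
  classical
  rw [← Fin.prod_const, Finset.prod_univ_sum, Fintype.piFinset_univ]
  simp [Finset.prod_smul, monomial_sum_one, X]

-- The functional sends a monomial to the common value of `lam` on its factorizations.
open MvPolynomial in
lemma exists_linearMap_sum_smul_X_pow [Fintype κ] {q : ℕ} (lam : (Fin q → κ) → R)
    (hlam : ∀ (σ : Equiv.Perm (Fin q)) f, lam (f ∘ σ) = lam f) :
    ∃ ρ : MvPolynomial κ R →ₗ[R] R, ∀ a : κ → R,
      ρ ((∑ i, a i • X i) ^ q) = ∑ f, lam f * ∏ k, a (f k) := by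
  let D (f : Fin q → κ) : κ →₀ ℕ := ∑ k, Finsupp.single (f k) 1
  have hD : lam.FactorsThrough D := fun f g h => by
    obtain ⟨σ, rfl⟩ := exists_perm_comp_eq_of_sum_single_eq h
    exact hlam σ g
  refine ⟨(basisMonomials κ R).constr R (Function.extend D lam 0), fun a => ?_⟩
  have hρ (f) : (basisMonomials κ R).constr R (Function.extend D lam 0)
      (monomial (D f) 1) = lam f := by
    simpa [hD.extend_apply] using
      (basisMonomials κ R).constr_basis R (Function.extend D lam 0) (D f)
  simp only [sum_smul_X_pow, map_sum, map_smul, hρ, smul_eq_mul, mul_comm (lam _), D]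

end PolynomialTrick

section FlatTrick

lemma mul_prod_comp_perm {ι κ M : Type*} [Fintype κ] [CommMonoid M] {u : M} {v : κ → ι → M}
    (h : ∀ k l i j, u * v k i * v l j = u * v k j * v l i) (σ : Equiv.Perm κ) (f : κ → ι) :
    u * ∏ k, v k (f (σ k)) = u * ∏ k, v k (f k) := by
  classical
  induction σ using Equiv.Perm.swap_induction_on generalizing f with
  | one => rfl
  | swap_mul σ a b hab ih =>
    refine (ih (f ∘ Equiv.swap a b)).trans ?_
    have prod_compl : ∏ k ∈ {a, b}ᶜ, v k (f (Equiv.swap a b k)) = ∏ k ∈ {a, b}ᶜ, v k (f k) := by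
      refine Finset.prod_congr rfl fun k hk => ?_
      simp only [Finset.mem_compl, Finset.mem_insert, Finset.mem_singleton, not_or] at hk
      rw [Equiv.swap_apply_of_ne_of_ne hk.1 hk.2]
    simp only [← Finset.prod_mul_prod_compl {a, b}, Finset.prod_pair hab, Function.comp_apply,
      prod_compl, Equiv.swap_apply_left, Equiv.swap_apply_right, ← mul_assoc, h a b (f b)]

variable {V N : Type*} [CommRing V] [AddCommGroup N] [Module V N] [Module.Flat V N]

lemma exists_eq_sum_smul_of_smul_comm {κ : Type*} [Finite κ] {μ : N →ₗ[V] V}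
    (hμ : ∀ x y, μ x • y = μ y • x) (x : κ → N) :
    ∃ (r : ℕ) (z : Fin r → N) (v : κ → Fin r → V),
      (∀ k, x k = ∑ i, v k i • z i) ∧ ∀ k l i, μ (x k) * v l i = μ (x l) * v k i := by
  let relation : (κ × κ →₀ V) →ₗ[V] κ →₀ V := Finsupp.linearCombination V fun p =>
    μ (x p.1) • Finsupp.single p.2 1 - μ (x p.2) • Finsupp.single p.1 1
  have h : Finsupp.linearCombination V x ∘ₗ relation = 0 := by
    ext p
    simp [relation, hμ (x p.1) (x p.2)]
  obtain ⟨r, v, z, hz, hv⟩ := Module.Flat.exists_factorization_of_comp_eq_zero_of_free h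
  refine ⟨r, fun i => z (Finsupp.single i 1), fun k => v (Finsupp.single k 1), fun k => ?_,
    fun k l i => ?_⟩
  · have hk : x k = z (v (Finsupp.single k 1)) := by
      simpa using LinearMap.congr_fun hz (Finsupp.single k 1)
    conv_lhs => rw [hk, ← Finsupp.univ_sum_single (v (Finsupp.single k 1)), map_sum]
    simp [← map_smul]
  · simpa [relation, sub_eq_zero, -Finsupp.smul_single] using
      DFunLike.congr_fun (LinearMap.congr_fun hv (Finsupp.single (k, l) 1)) i

lemma exists_symmetric_sum_eq_prod {μ : N →ₗ[V] V} (hμ : ∀ x y, μ x • y = μ y • x) {q : ℕ}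
    (x : Fin (q + 1) → N) :
    ∃ (r : ℕ) (z : Fin r → N) (lam : (Fin q → Fin r) → V),
      (∀ (σ : Equiv.Perm (Fin q)) f, lam (f ∘ σ) = lam f) ∧
      ∑ f, lam f * ∏ k, μ (z (f k)) = ∏ k, μ (x k) := by
  obtain ⟨r, z, v, hx, hv⟩ := exists_eq_sum_smul_of_smul_comm hμ x
  refine ⟨r, z, fun f => μ (x 0) * ∏ k, v (Fin.succ k) (f k),
    mul_prod_comp_perm fun k l i j => ?_, ?_⟩
  · calc μ (x 0) * v k.succ i * v l.succ j
        = v 0 i * (μ (x k.succ) * v l.succ j) := by rw [hv 0]; ring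
      _ = μ (x l.succ) * v 0 i * v k.succ j := by rw [hv k.succ]; ring
      _ = μ (x 0) * v k.succ j * v l.succ i := by rw [hv l.succ]; ring
  · have hμx (k) : μ (x k) = ∑ i, v k i * μ (z i) := by
      conv_lhs => rw [hx k, map_sum]
      simp
    rw [Fin.prod_univ_succ]
    simp only [fun k : Fin q => hμx k.succ]
    rw [Finset.prod_univ_sum, Finset.mul_sum, Fintype.piFinset_univ]
    exact Finset.sum_congr rfl fun f _ => by rw [Finset.prod_mul_distrib, mul_assoc]

end FlatTrick

section AlmostDescent

lemma mulMap_smul_comm {V : Type*} [CommRing V] (I : Ideal V) (x y : I ⊗[V] I) :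
    Submodule.mulMap I I x • y = Submodule.mulMap I I y • x := by
  induction x with
  | zero => simp
  | add x x' hx hx' => rw [map_add, add_smul, smul_add, hx, hx']
  | tmul a b =>
    induction y with
    | zero => simp
    | add y y' hy hy' => rw [map_add, add_smul, smul_add, hy, hy']
    | tmul c d =>
      have smul_swap (s t : I) : (s : V) • t = (t : V) • s := Subtype.ext (mul_comm _ _)
      rw [Submodule.mulMap_tmul, Submodule.mulMap_tmul, ← TensorProduct.smul_tmul_smul,
        smul_swap a, smul_swap b, TensorProduct.smul_tmul_smul]

variable {ι V S : Type*} [CommRing V] [CommRing S] [Algebra V S] {m : Ideal V}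
  {R : Type u} [CommRing R] [Algebra V R] [Algebra R S] [IsScalarTower V R S]

lemma algebraMap_prod_mulMap_mem_splitIdeal [Module.Flat V (m ⊗[V] m)] {n : ℕ} {e : Fin n → S}
    (hker : ∀ a ∈ m, ∀ x ∈ RingHom.ker (algebraMap R S), algebraMap V R a * x = 0)
    (hfin : ∀ a ∈ m, ∀ s : S, algebraMap V R a • s ∈ Submodule.span R (Set.range e))
    {K : Submodule R (ι →₀ R)}
    (hK : m ≤ (splitIdeal ⊥ (scalarExt S K)).comap (algebraMap V S))
    (x : Fin (3 * (n + 1) ^ n + 1 + 1) → m ⊗[V] m) :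
    algebraMap V R (∏ k, Submodule.mulMap m m (x k)) ∈ splitIdeal ⊥ K := by
  obtain ⟨r, z, lam, hlam, hprod⟩ := exists_symmetric_sum_eq_prod (mulMap_smul_comm m) x
  obtain ⟨ρ, hρ⟩ := exists_linearMap_sum_smul_X_pow (R := R) (fun f => algebraMap V R (lam f))
    fun σ f => congrArg _ (hlam σ f)
  have mulMap_mem (i) : Submodule.mulMap m m (z i) ∈ m :=
    Ideal.mul_le_left (Submodule.mulMap_range m m ▸ LinearMap.mem_range_self _ (z i))
  have h := linearMap_sum_smul_pow_mem_splitIdeal (fun i => hfin _ (mulMap_mem i))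
    (fun i => hker _ (mulMap_mem i))
    (fun i => by simpa [← IsScalarTower.algebraMap_apply] using hK (mulMap_mem i))
    MvPolynomial.X ρ
  rw [hρ] at h
  simpa [← hprod] using h

theorem le_comap_splitIdeal_of_le_comap_splitIdeal_scalarExt (hm : m * m = m)
    [Module.Flat V (m ⊗[V] m)]
    (hker : ∀ a ∈ m, ∀ x ∈ RingHom.ker (algebraMap R S), algebraMap V R a * x = 0)
    (hfin : ∃ Q : Submodule R S, Q.FG ∧ ∀ s : S, ∀ a ∈ m, algebraMap V S a • s ∈ Q)
    {K : Submodule R (ι →₀ R)}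
    (hK : m ≤ (splitIdeal ⊥ (scalarExt S K)).comap (algebraMap V S)) :
    m ≤ (splitIdeal ⊥ K).comap (algebraMap V R) := by
  obtain ⟨Q, hQ, hfin⟩ := hfin
  obtain ⟨n, e, rfl⟩ := Submodule.fg_iff_exists_fin_generating_family.mp hQ
  calc m = m ^ (3 * (n + 1) ^ n + 1 + 1) := (IsIdempotentElem.pow_succ_eq _ hm).symm
    _ ≤ (splitIdeal ⊥ K).comap (algebraMap V R) := by
      rw [Submodule.pow_eq_span_pow_set, Submodule.span_le]
      intro y hy
      obtain ⟨f, rfl⟩ := Set.mem_pow.mp hy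
      have mem_range (k) : (f k : V) ∈ LinearMap.range (Submodule.mulMap m m) := by
        rw [Submodule.mulMap_range, hm]
        exact (f k).2
      choose x hx using mem_range
      have h := algebraMap_prod_mulMap_mem_splitIdeal hker
        (fun a ha s => by simpa only [algebraMap_smul] using hfin s a ha) hK x
      simpa only [hx, List.prod_ofFn, SetLike.mem_coe, Ideal.mem_comap] using h

end AlmostDescent

/-- Let `m·m = m` with `m ⊗_V m` flat, and let `R → S` be a morphism
of `V`-algebras which is a finite monomorphism of almost algebras: `m·ker = 0` and there
is a finitely generated `R`-submodule `Q ⊆ S` with `m·S ⊆ Q`.  If `M` is an `R`-module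
such that `S ⊗_R M` is almost flat over `S`, then `M` is almost flat over `R`. -/
theorem almostFlat_descends_along_finite_monomorphism
    (V : Type v) [CommRing V] (m : Ideal V) (hm : m * m = m)
    (hflat : Module.Flat V (TensorProduct V m m))
    (R S : Type u) [CommRing R] [CommRing S] [Algebra V R] [Algebra V S]
    [Algebra R S] [IsScalarTower V R S]
    (hker : ∀ a ∈ m, ∀ x ∈ RingHom.ker (algebraMap R S), algebraMap V R a * x = 0)
    (hfin : ∃ Q : Submodule R S, Q.FG ∧ ∀ s : S, ∀ a ∈ m, algebraMap V S a • s ∈ Q)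
    (M : Type u) [AddCommGroup M] [Module R M]
    (hMS : IsAlmostFlat V m S (S ⊗[R] M)) :
    IsAlmostFlat V m R M := by
  have hR : Function.Surjective (Finsupp.linearCombination R (id : M → M)) :=
    Finsupp.linearCombination_id_surjective R M
  rw [isAlmostFlat_iff hR]
  rw [isAlmostFlat_iff linearCombination_one_tmul_surjective,
    ker_linearCombination_one_tmul] at hMS
  exact le_comap_splitIdeal_of_le_comap_splitIdeal_scalarExt hm hker hfin hMS
end

section
/- Let V be a commutative ring and m ⊆ V an ideal satisfying m·m = m such that m̃ = m ⊗_V m is a flat V-module. Let R be a commutative V-algebra and φ : M → N an R-linear map which is an almost isomorphism (m·ker(φ) = 0 and m·coker(φ) = 0). Then for every integer p ≥ 1 the induced maps φ^{⊗p} : M^{⊗p} → N^{⊗p} on p-fold tensor powers over R, Sym^p(φ) : Sym^p_R(M) → Sym^p_R(N) on symmetric powers, and Λ^p(φ) : Λ^p_R(M) → Λ^p_R(N) on exterior powers are almost isomorphisms. -/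
open scoped TensorProduct

/-- The submodule of the `p`-th tensor power of `M` spanned by the differences
`t - σ·t` for permutations `σ ∈ S_p`; the quotient by it is the `p`-th symmetric power
`Sym^p_R(M)`. -/
def symRelations (R : Type*) [CommRing R] (M : Type*) [AddCommGroup M] [Module R M]
    (p : ℕ) : Submodule R (⨂[R]^p M) :=
  Submodule.span R
    {x | ∃ (σ : Equiv.Perm (Fin p)) (t : ⨂[R]^p M),
      x = t - PiTensorProduct.reindex R (fun _ => M) σ t}

/-- The map induced on `p`-th symmetric powers by a linear map `φ : M → N`. -/
noncomputable def symPowerMap {R : Type*} [CommRing R]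
    {M N : Type*} [AddCommGroup M] [Module R M] [AddCommGroup N] [Module R N]
    (φ : M →ₗ[R] N) (p : ℕ) :
    ((⨂[R]^p M) ⧸ symRelations R M p) →ₗ[R] ((⨂[R]^p N) ⧸ symRelations R N p) :=
  Submodule.mapQ _ _ (PiTensorProduct.map fun _ => φ)
    (by
      rw [symRelations, Submodule.span_le]
      rintro x ⟨σ, t, rfl⟩
      refine SetLike.mem_coe.2 (Submodule.mem_comap.2 ?_)
      have h : PiTensorProduct.map (fun _ => φ)
            (t - PiTensorProduct.reindex R (fun _ => M) σ t) =
          PiTensorProduct.map (fun _ => φ) t -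
            PiTensorProduct.reindex R (fun _ => N) σ
              (PiTensorProduct.map (fun _ => φ) t) := by
        rw [map_sub]
        congr 1
        exact PiTensorProduct.map_reindex (fun _ => φ) σ t
      rw [h]
      exact Submodule.subset_span
        ⟨σ, PiTensorProduct.map (fun _ => φ) t, rfl⟩)

/-- The map induced on `p`-th exterior powers by a linear map `φ : M → N`. -/
noncomputable def exteriorPowerMap {R : Type*} [CommRing R]
    {M N : Type*} [AddCommGroup M] [Module R M] [AddCommGroup N] [Module R N]
    (φ : M →ₗ[R] N) (p : ℕ) :
    (⋀[R]^p M) →ₗ[R] ⋀[R]^p N :=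
  (ExteriorAlgebra.map φ).toLinearMap.restrict (p := ⋀[R]^p M) (q := ⋀[R]^p N)
    (by
      intro x hx
      have hle : Submodule.map (ExteriorAlgebra.map φ).toLinearMap (⋀[R]^p M) ≤
          ⋀[R]^p N := by
        rw [show (⋀[R]^p M : Submodule R (ExteriorAlgebra R M)) =
            LinearMap.range (ExteriorAlgebra.ι R (M := M)) ^ p from rfl,
          Submodule.map_pow]
        refine pow_le_pow_left' ?_ p
        rintro y ⟨z, ⟨w, rfl⟩, rfl⟩
        exact ⟨φ w, by simp⟩
      exact hle ⟨x, hx, rfl⟩)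

/-- A linear map of modules over a `V`-algebra `R` is an almost isomorphism (w.r.t. an
ideal `m ⊆ V`) if its kernel and cokernel are killed by `m`. -/
def IsAlmostIsomorphism (V : Type*) [CommRing V] (m : Ideal V)
    {R : Type*} [CommRing R] [Algebra V R]
    {M N : Type*} [AddCommGroup M] [Module R M] [AddCommGroup N] [Module R N]
    (φ : M →ₗ[R] N) : Prop :=
  (∀ a ∈ m, ∀ x ∈ LinearMap.ker φ, algebraMap V R a • x = 0) ∧
    (∀ a ∈ m, ∀ y : N, algebraMap V R a • y ∈ LinearMap.range φ)

/-!
If `φ ∘ ψ = a` and `ψ ∘ φ = a`, and `(b, χ)` is another such pair, then `b ψ = ψ ∘ φ ∘ χ = a χ`.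
Hence tensor products of such `ψ`'s, which a priori do not descend to symmetric or exterior powers,
do descend after multiplication by further scalars of this kind: by one scalar for the symmetric
powers and by the square of one for the exterior powers. It remains to see that an idempotent ideal
`m` with `m ⊗ m` flat is generated by squares. Let `μ : m ⊗ m → m` be the multiplication. Modulo the
squares, `(x, y) ↦ μ(x) μ(y)` is an alternating form `B` on `m ⊗ m`. By flatness, elements `x`, `y`,
`z` lift to a free module together with the relations `μ(x) y = μ(y) x`; there `B` has the shape
`C - Cᵗ`, and the relations force `μ(x) B(y, z) = 0`.
-/

section FlatIdeal

variable {A : Type*} [CommRing A]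

theorem exists_eq_sub_flip_of_isAlt {ι F Q : Type*} [LinearOrder ι] [AddCommGroup F] [Module A F]
    [AddCommGroup Q] [Module A Q] (b : Module.Basis ι A F) {B : F →ₗ[A] F →ₗ[A] Q}
    (hB : B.IsAlt) : ∃ C : F →ₗ[A] F →ₗ[A] Q, B = C - C.flip := by
  refine ⟨b.constr A fun i => b.constr A fun j => if i < j then B (b i) (b j) else 0, ?_⟩
  refine LinearMap.ext_basis b b fun i j => ?_
  rcases lt_trichotomy i j with hij | rfl | hji
  · simp [Module.Basis.constr_basis, hij, hij.not_gt]
  · simp [Module.Basis.constr_basis, hB.self_eq_zero]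
  · simp [Module.Basis.constr_basis, hji, hji.not_gt, hB.neg]

variable {P : Type*} [AddCommGroup P] [Module A P] [Module.Flat A P] {μ : P →ₗ[A] A}

theorem exists_factorization_smul_comm (hμ : ∀ x y, μ x • y = μ y • x)
    {F : Type*} [AddCommGroup F] [Module A F] [Module.Free A F] [Module.Finite A F]
    (f : F →ₗ[A] P) :
    ∃ (k : ℕ) (g : F →ₗ[A] (Fin k →₀ A)) (h : (Fin k →₀ A) →ₗ[A] P),
      f = h ∘ₗ g ∧ ∀ u v, μ (f u) • g v = μ (f v) • g u := by
  let S : F →ₗ[A] F →ₗ[A] F := (LinearMap.lsmul A F).comp (μ ∘ₗ f)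
  have hf : f ∘ₗ TensorProduct.lift (S - S.flip) = 0 := by
    ext u v
    simp [S, hμ (f u) (f v)]
  obtain ⟨k, g, h, hfgh, hg⟩ := Module.Flat.exists_factorization_of_comp_eq_zero_of_free hf
  refine ⟨k, g, h, hfgh, fun u v => sub_eq_zero.1 ?_⟩
  simpa [S] using LinearMap.congr_fun hg (u ⊗ₜ v)

theorem smul_apply_eq_zero_of_isAlt (hμ : ∀ x y, μ x • y = μ y • x)
    {Q : Type*} [AddCommGroup Q] [Module A Q] {B : P →ₗ[A] P →ₗ[A] Q} (hB : B.IsAlt)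
    (x y z : P) : μ x • B y z = 0 := by
  obtain ⟨k, g, h, hgh, hcomm⟩ :=
    exists_factorization_smul_comm hμ (Fintype.linearCombination A ![x, y, z])
  obtain ⟨C, hC⟩ := exists_eq_sub_flip_of_isAlt (B := B.compl₁₂ h h)
    Finsupp.basisSingleOne fun u => hB (h u)
  have lift_apply (i : Fin 3) : h (g (Pi.single i 1)) = ![x, y, z] i := by
    rw [← LinearMap.comp_apply, ← hgh, Fintype.linearCombination_apply_single, one_smul]
  set a := g (Pi.single 0 1)
  set b := g (Pi.single 1 1)
  set c := g (Pi.single 2 1)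
  have hb : h b = y := lift_apply 1
  have hc : h c = z := lift_apply 2
  have hab : μ x • b = μ y • a := by simpa [a, b] using hcomm (Pi.single 0 1) (Pi.single 1 1)
  have hac : μ x • c = μ z • a := by simpa [a, c] using hcomm (Pi.single 0 1) (Pi.single 2 1)
  have hbc : μ y • c = μ z • b := by simpa [b, c] using hcomm (Pi.single 1 1) (Pi.single 2 1)
  calc μ x • B y z = μ x • (C b c - C c b) := by
        rw [← hb, ← hc]
        exact congrArg (μ x • ·) (LinearMap.congr_fun₂ hC b c)
    _ = C (μ x • b) c - C (μ x • c) b := by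
        simp only [smul_sub, map_smul, LinearMap.smul_apply]
    _ = C a (μ y • c - μ z • b) := by
        simp only [hab, hac, map_sub, map_smul, LinearMap.smul_apply]
    _ = 0 := by rw [hbc, sub_self, map_zero]

end FlatIdeal

section SquareGenerated

open scoped Pointwise

variable {A : Type*} [CommRing A] {m : Ideal A}

theorem mulMap_smul_comm_s19 (x y : m ⊗[A] m) :
    Submodule.mulMap m m x • y = Submodule.mulMap m m y • x := by
  induction x with
  | zero => simp
  | add x x' hx hx' => rw [map_add, add_smul, smul_add, hx, hx']
  | tmul a b =>
    induction y with
    | zero => simp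
    | add y y' hy hy' => rw [map_add, add_smul, smul_add, hy, hy']
    | tmul c d =>
      have hac : (a : A) • c = (c : A) • a := Subtype.ext (mul_comm _ _)
      have hbd : (b : A) • d = (d : A) • b := Subtype.ext (mul_comm _ _)
      simp only [Submodule.mulMap_tmul, ← TensorProduct.smul_tmul_smul, hac, hbd]

theorem le_span_sq_of_flat_tensorProduct (hm : m * m = m) [Module.Flat A (m ⊗[A] m)] :
    m ≤ Ideal.span ((· ^ 2) '' (m : Set A)) := by
  set I := Ideal.span ((· ^ 2) '' (m : Set A))
  set μ := Submodule.mulMap m m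
  have range_μ : LinearMap.range μ = m := (Submodule.mulMap_range m m).trans hm
  have mul_mul_mem (x y z : m ⊗[A] m) : μ x * (μ y * μ z) ∈ I := by
    let B : m ⊗[A] m →ₗ[A] m ⊗[A] m →ₗ[A] A ⧸ I :=
      ((LinearMap.mul A A).compr₂ I.mkQ).compl₁₂ μ μ
    have hB : B.IsAlt := fun w => (Submodule.Quotient.mk_eq_zero I).2 <|
      Ideal.subset_span ⟨μ w, range_μ.le ⟨w, rfl⟩, sq (μ w)⟩
    exact (Submodule.Quotient.mk_eq_zero I).1
      (smul_apply_eq_zero_of_isAlt mulMap_smul_comm_s19 hB x y z)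
  calc m = m * (m * m) := by rw [hm, hm]
    _ ≤ I := Ideal.mul_le.2 fun a ha _ hw => by
      suffices h : m * m ≤ Submodule.comap (LinearMap.mulLeft A a) I from h hw
      refine Ideal.mul_le.2 fun b hb c hc => ?_
      rw [← range_μ] at ha hb hc
      obtain ⟨x, rfl⟩ := ha
      obtain ⟨y, rfl⟩ := hb
      obtain ⟨z, rfl⟩ := hc
      exact mul_mul_mem x y z

theorem map_le_span_sq {B : Type*} [CommRing B] (f : A →+* B)
    (hm : m ≤ Ideal.span ((· ^ 2) '' (m : Set A))) :
    m.map f ≤ Ideal.span ((· ^ 2) '' (m.map f : Set B)) := by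
  refine (Ideal.map_mono hm).trans ?_
  rw [Ideal.map_span]
  refine Ideal.span_mono ?_
  rintro _ ⟨_, ⟨a, ha, rfl⟩, rfl⟩
  exact ⟨f a, Ideal.mem_map_of_mem f ha, (map_pow f a 2).symm⟩

theorem isIdempotentElem_of_le_span_sq (hm : m ≤ Ideal.span ((· ^ 2) '' (m : Set A))) :
    IsIdempotentElem m := by
  refine le_antisymm Ideal.mul_le_left (hm.trans (Ideal.span_le.2 ?_))
  rintro _ ⟨a, ha, rfl⟩
  simpa only [sq, SetLike.mem_coe] using Ideal.mul_mem_mul ha ha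

theorem le_pow_of_isIdempotentElem (hm : IsIdempotentElem m) (n : ℕ) : m ≤ m ^ n := by
  cases n with
  | zero => simp
  | succ n => exact (hm.pow_succ_eq n).ge

theorem prod_le_of_forall_prod_mem {ι : Type*} [Fintype ι] {I : ι → Ideal A} {J : Ideal A}
    (h : ∀ c : ι → A, (∀ i, c i ∈ I i) → ∏ i, c i ∈ J) : ∏ i, I i ≤ J := by
  have hspan : ∏ i, I i = Ideal.span (∏ i, (I i : Set A)) := by
    simpa only [Ideal.span_eq] using Ideal.prod_span Finset.univ fun i => (I i : Set A)
  rw [hspan, Ideal.span_le]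
  intro _ ha
  obtain ⟨c, hc, rfl⟩ := (Set.mem_fintype_prod _ _).1 ha
  exact h c hc

end SquareGenerated

section InverseUpTo

variable {R : Type*} [CommRing R] {M N : Type*} [AddCommGroup M] [Module R M]
  [AddCommGroup N] [Module R N]

/-- `ψ` inverts `φ` up to the scalar `a`: both composites are multiplication by `a`. -/
structure IsInverseUpTo (a : R) (φ : M →ₗ[R] N) (ψ : N →ₗ[R] M) : Prop where
  apply_inverse : ∀ y, φ (ψ y) = a • y
  inverse_apply : ∀ x, ψ (φ x) = a • x

theorem IsInverseUpTo.smul_comm {a b : R} {φ : M →ₗ[R] N} {ψ χ : N →ₗ[R] M}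
    (hψ : IsInverseUpTo a φ ψ) (hχ : IsInverseUpTo b φ χ) (y : N) : b • ψ y = a • χ y := by
  rw [← map_smul, ← hχ.apply_inverse, hψ.inverse_apply]

/-- The ideal of all scalars up to which `φ` has an inverse. It measures how far `φ` is from an
isomorphism: `φ` is an almost isomorphism for an idempotent ideal exactly when that ideal is
contained in this one. -/
def inverseIdeal (φ : M →ₗ[R] N) : Ideal R where
  carrier := {a | ∃ ψ, IsInverseUpTo a φ ψ}
  add_mem' := by
    rintro a b ⟨ψ, hψ⟩ ⟨χ, hχ⟩
    exact ⟨ψ + χ, by simp [hψ.apply_inverse, hχ.apply_inverse, add_smul],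
      by simp [hψ.inverse_apply, hχ.inverse_apply, add_smul]⟩
  zero_mem' := ⟨0, by simp, by simp⟩
  smul_mem' := by
    rintro c a ⟨ψ, hψ⟩
    exact ⟨c • ψ, by simp [hψ.apply_inverse, mul_smul], by simp [hψ.inverse_apply, mul_smul]⟩

theorem mul_mem_inverseIdeal {φ : M →ₗ[R] N} {a b : R}
    (ha : ∀ x ∈ LinearMap.ker φ, a • x = 0) (hb : ∀ y, b • y ∈ LinearMap.range φ) :
    a * b ∈ inverseIdeal φ := by
  have ker_le : LinearMap.ker φ ≤ LinearMap.ker (a • LinearMap.id : M →ₗ[R] M) := ha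
  let ψ : N →ₗ[R] M := (LinearMap.ker φ).liftQ (a • LinearMap.id) ker_le ∘ₗ
    φ.quotKerEquivRange.symm ∘ₗ (b • LinearMap.id).codRestrict (LinearMap.range φ) hb
  have ψ_apply {x : M} {y : N} (hxy : φ x = b • y) : ψ y = a • x := by
    have hx : φ.quotKerEquivRange.symm
        ((b • LinearMap.id).codRestrict (LinearMap.range φ) hb y) = Submodule.Quotient.mk x :=
      φ.quotKerEquivRange.symm_apply_eq.2 (Subtype.ext hxy.symm)
    exact congrArg _ hx
  refine ⟨ψ, fun y => ?_, fun x => ?_⟩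
  · obtain ⟨x, hx⟩ := hb y
    rw [ψ_apply hx, map_smul, hx, mul_smul]
  · rw [ψ_apply (map_smul φ b x), mul_smul]

variable {V : Type*} [CommRing V] [Algebra V R] {m : Ideal V}

theorem isAlmostIsomorphism_of_map_le_inverseIdeal {φ : M →ₗ[R] N}
    (h : m.map (algebraMap V R) ≤ inverseIdeal φ) : IsAlmostIsomorphism V m φ := by
  constructor
  · intro a ha x hx
    obtain ⟨ψ, hψ⟩ := h (Ideal.mem_map_of_mem _ ha)
    rw [← hψ.inverse_apply, LinearMap.mem_ker.1 hx, map_zero]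
  · intro a ha y
    obtain ⟨ψ, hψ⟩ := h (Ideal.mem_map_of_mem _ ha)
    exact ⟨ψ y, hψ.apply_inverse y⟩

theorem isAlmostIsomorphism_iff_map_le_inverseIdeal (hm : IsIdempotentElem m) {φ : M →ₗ[R] N} :
    IsAlmostIsomorphism V m φ ↔ m.map (algebraMap V R) ≤ inverseIdeal φ := by
  refine ⟨fun hφ => ?_, isAlmostIsomorphism_of_map_le_inverseIdeal⟩
  rw [Ideal.map_le_iff_le_comap, ← hm.eq, Ideal.mul_le]
  intro a ha b hb
  rw [Ideal.mem_comap, map_mul]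
  exact mul_mem_inverseIdeal (hφ.1 a ha) (hφ.2 b hb)

end InverseUpTo

section TensorProducts

variable {R : Type*} [CommRing R] {ι : Type*} [Fintype ι] {M N : ι → Type*}
  [∀ i, AddCommGroup (M i)] [∀ i, Module R (M i)] [∀ i, AddCommGroup (N i)] [∀ i, Module R (N i)]

theorem IsInverseUpTo.piTensorProduct_map {c : ι → R} {φ : ∀ i, M i →ₗ[R] N i}
    {ψ : ∀ i, N i →ₗ[R] M i} (h : ∀ i, IsInverseUpTo (c i) (φ i) (ψ i)) :
    IsInverseUpTo (∏ i, c i) (PiTensorProduct.map φ) (PiTensorProduct.map ψ) := by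
  have hφψ : PiTensorProduct.map φ ∘ₗ PiTensorProduct.map ψ = (∏ i, c i) • LinearMap.id := by
    ext v
    simp [(h _).apply_inverse, MultilinearMap.map_smul_univ]
  have hψφ : PiTensorProduct.map ψ ∘ₗ PiTensorProduct.map φ = (∏ i, c i) • LinearMap.id := by
    ext v
    simp [(h _).inverse_apply, MultilinearMap.map_smul_univ]
  exact ⟨LinearMap.congr_fun hφψ, LinearMap.congr_fun hψφ⟩

theorem prod_inverseIdeal_le_inverseIdeal_piTensorProduct_map (φ : ∀ i, M i →ₗ[R] N i) :
    ∏ i, inverseIdeal (φ i) ≤ inverseIdeal (PiTensorProduct.map φ) := by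
  refine prod_le_of_forall_prod_mem fun c hc => ?_
  choose ψ hψ using hc
  exact ⟨PiTensorProduct.map ψ, .piTensorProduct_map hψ⟩

end TensorProducts

section Powers

variable {R : Type*} [CommRing R] {M N : Type*} [AddCommGroup M] [Module R M]
  [AddCommGroup N] [Module R N]

theorem symRelations_le_comap {p : ℕ} {f : (⨂[R]^p M) →ₗ[R] ⨂[R]^p N}
    (hf : ∀ (σ : Equiv.Perm (Fin p)) (t : ⨂[R]^p M),
      f (PiTensorProduct.reindex R (fun _ => M) σ t) =
        PiTensorProduct.reindex R (fun _ => N) σ (f t)) :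
    symRelations R M p ≤ (symRelations R N p).comap f := by
  refine Submodule.span_le.2 ?_
  rintro _ ⟨σ, t, rfl⟩
  exact Submodule.subset_span ⟨σ, f t, by rw [map_sub, hf]⟩

theorem IsInverseUpTo.smul_apply_reindex {p : ℕ} {φ : M →ₗ[R] N} {a b : R}
    {ψ χ : (⨂[R]^p N) →ₗ[R] ⨂[R]^p M}
    (hψ : IsInverseUpTo a (PiTensorProduct.map fun _ => φ) ψ)
    (hχ : IsInverseUpTo b (PiTensorProduct.map fun _ => φ) χ)
    (σ : Equiv.Perm (Fin p)) (t : ⨂[R]^p N) :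
    b • ψ (PiTensorProduct.reindex R (fun _ => N) σ t) =
      PiTensorProduct.reindex R (fun _ => M) σ (b • ψ t) := by
  have map_reindex (s : ⨂[R]^p M) : PiTensorProduct.map (fun _ => φ)
      (PiTensorProduct.reindex R (fun _ => M) σ s) =
        PiTensorProduct.reindex R (fun _ => N) σ (PiTensorProduct.map (fun _ => φ) s) :=
    PiTensorProduct.map_reindex (fun _ => φ) σ s
  calc b • ψ (PiTensorProduct.reindex R (fun _ => N) σ t)
      = ψ (PiTensorProduct.reindex R (fun _ => N) σ
          (PiTensorProduct.map (fun _ => φ) (χ t))) := by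
        rw [hχ.apply_inverse, map_smul, map_smul]
    _ = a • PiTensorProduct.reindex R (fun _ => M) σ (χ t) := by
        rw [← map_reindex, hψ.inverse_apply]
    _ = PiTensorProduct.reindex R (fun _ => M) σ (b • ψ t) := by
        rw [hψ.smul_comm hχ, map_smul]

theorem sq_inverseIdeal_map_le_inverseIdeal_symPowerMap (φ : M →ₗ[R] N) (p : ℕ) :
    inverseIdeal (PiTensorProduct.map fun _ : Fin p => φ) ^ 2 ≤
      inverseIdeal (symPowerMap φ p) := by
  rw [sq, Ideal.mul_le]
  rintro b ⟨χ, hχ⟩ a ⟨ψ, hψ⟩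
  have hbψ : symRelations R N p ≤ (symRelations R M p).comap (b • ψ) :=
    symRelations_le_comap fun σ t => hψ.smul_apply_reindex hχ σ t
  refine ⟨Submodule.mapQ _ _ (b • ψ) hbψ, fun y => ?_, fun x => ?_⟩
  · obtain ⟨t, rfl⟩ := Submodule.mkQ_surjective _ y
    simp [symPowerMap, hψ.apply_inverse, mul_smul]
  · obtain ⟨t, rfl⟩ := Submodule.mkQ_surjective _ x
    simp [symPowerMap, hψ.inverse_apply, mul_smul]

theorem exteriorPowerMap_ιMulti (φ : M →ₗ[R] N) {p : ℕ} (v : Fin p → M) :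
    exteriorPowerMap φ p (exteriorPower.ιMulti R p v) = exteriorPower.ιMulti R p (φ ∘ v) :=
  Subtype.ext (ExteriorAlgebra.map_apply_ιMulti φ v)

theorem sq_smul_alternatingMap_eq_zero {ι Q : Type*} [AddCommGroup Q] [Module R Q]
    (f : M [⋀^ι]→ₗ[R] Q) {φ : M →ₗ[R] N} {c : ι → R} {ψ : ι → N →ₗ[R] M}
    (hψ : ∀ k, IsInverseUpTo (c k) φ (ψ k)) {d : R} {χ : N →ₗ[R] M} (hχ : IsInverseUpTo d φ χ)
    {w : ι → N} {i j : ι} (hij : i ≠ j) (hw : w i = w j) : d ^ 2 • f (fun k => ψ k (w k)) = 0 := by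
  classical
  set v : ι → M := fun k => ψ k (w k) with hv
  let u (x y : M) : ι → M := Function.update (Function.update v i x) j y
  have map_u_smul (a b : R) (x y : M) : f (u (a • x) (b • y)) = a • b • f (u x y) := by
    rw [f.map_update_smul, Function.update_comm hij, f.map_update_smul,
      Function.update_comm hij.symm, smul_comm]
  calc d ^ 2 • f v = d • d • f (u (v i) (v j)) := by simp [u, sq, mul_smul]
    _ = f (u (c i • χ (w i)) (c j • χ (w j))) := by
      rw [← map_u_smul, hv, (hψ i).smul_comm hχ, (hψ j).smul_comm hχ]
    _ = 0 := by
      rw [map_u_smul, f.map_eq_zero_of_eq _ _ hij, smul_zero, smul_zero]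
      simp [u, hij, hw]

theorem sq_mul_prod_mem_inverseIdeal_exteriorPowerMap {φ : M →ₗ[R] N} {p : ℕ} {c : Fin p → R}
    {d : R} (hc : ∀ k, c k ∈ inverseIdeal φ) (hd : d ∈ inverseIdeal φ) :
    d ^ 2 * ∏ k, c k ∈ inverseIdeal (exteriorPowerMap φ p) := by
  choose ψ hψ using hc
  obtain ⟨χ, hχ⟩ := hd
  let F : N [⋀^Fin p]→ₗ[R] ⋀[R]^p M :=
    { d ^ 2 • (exteriorPower.ιMulti R p).toMultilinearMap.compLinearMap ψ with
      map_eq_zero_of_eq' := fun _ _ _ hw hij =>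
        sq_smul_alternatingMap_eq_zero (exteriorPower.ιMulti R p) hψ hχ hij hw }
  have F_apply (w : Fin p → N) : F w = d ^ 2 • exteriorPower.ιMulti R p fun k => ψ k (w k) := rfl
  let Ψ := exteriorPower.alternatingMapLinearEquiv F
  have hφΨ : exteriorPowerMap φ p ∘ₗ Ψ = (d ^ 2 * ∏ k, c k) • LinearMap.id := by
    ext w
    simp [Ψ, F_apply, exteriorPowerMap_ιMulti, Function.comp_def, (hψ _).apply_inverse, mul_smul,
      AlternatingMap.map_smul_univ]
  have hΨφ : Ψ ∘ₗ exteriorPowerMap φ p = (d ^ 2 * ∏ k, c k) • LinearMap.id := by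
    ext v
    simp [Ψ, F_apply, exteriorPowerMap_ιMulti, Function.comp_def, (hψ _).inverse_apply, mul_smul,
      AlternatingMap.map_smul_univ]
  exact ⟨Ψ, LinearMap.congr_fun hφΨ, LinearMap.congr_fun hΨφ⟩

theorem span_sq_mul_pow_inverseIdeal_le_inverseIdeal_exteriorPowerMap (φ : M →ₗ[R] N) (p : ℕ) :
    Ideal.span ((· ^ 2) '' (inverseIdeal φ : Set R)) * inverseIdeal φ ^ p ≤
      inverseIdeal (exteriorPowerMap φ p) := by
  rw [← Fin.prod_const, Ideal.mul_le]
  intro a ha t ht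
  suffices h : Ideal.span ((· ^ 2) '' (inverseIdeal φ : Set R)) ≤
      Submodule.comap (LinearMap.mulRight R t) (inverseIdeal (exteriorPowerMap φ p)) from h ha
  rw [Ideal.span_le]
  rintro _ ⟨d, hd, rfl⟩
  suffices h : ∏ _k : Fin p, inverseIdeal φ ≤
      Submodule.comap (LinearMap.mulLeft R (d ^ 2)) (inverseIdeal (exteriorPowerMap φ p)) from h ht
  exact prod_le_of_forall_prod_mem fun c hc =>
    sq_mul_prod_mem_inverseIdeal_exteriorPowerMap hc hd

end Powers

theorem powers_preserve_almost_isomorphisms_general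
    {V : Type*} [CommRing V] {m : Ideal V} (hsq : m ≤ Ideal.span ((· ^ 2) '' (m : Set V)))
    {R : Type*} [CommRing R] [Algebra V R]
    {M N : Type*} [AddCommGroup M] [Module R M] [AddCommGroup N] [Module R N]
    {φ : M →ₗ[R] N} (hφ : IsAlmostIsomorphism V m φ) (p : ℕ) :
    IsAlmostIsomorphism V m
        (PiTensorProduct.map (fun _ : Fin p => φ) : (⨂[R]^p M) →ₗ[R] ⨂[R]^p N) ∧
      IsAlmostIsomorphism V m (symPowerMap φ p) ∧
      IsAlmostIsomorphism V m (exteriorPowerMap φ p) := by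
  set n := m.map (algebraMap V R)
  have hn : n ≤ Ideal.span ((· ^ 2) '' (n : Set R)) := map_le_span_sq (algebraMap V R) hsq
  have n_idem : IsIdempotentElem n := isIdempotentElem_of_le_span_sq hn
  have hnφ : n ≤ inverseIdeal φ :=
    (isAlmostIsomorphism_iff_map_le_inverseIdeal (isIdempotentElem_of_le_span_sq hsq)).1 hφ
  have n_le_pow : n ≤ inverseIdeal φ ^ p :=
    (le_pow_of_isIdempotentElem n_idem p).trans (pow_le_pow_left' hnφ p)
  have tensor : n ≤ inverseIdeal (PiTensorProduct.map fun _ : Fin p => φ) :=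
    n_le_pow.trans <| (Fin.prod_const p _).ge.trans <|
      prod_inverseIdeal_le_inverseIdeal_piTensorProduct_map _
  have sym : n ≤ inverseIdeal (symPowerMap φ p) :=
    (le_pow_of_isIdempotentElem n_idem 2).trans <| (pow_le_pow_left' tensor 2).trans <|
      sq_inverseIdeal_map_le_inverseIdeal_symPowerMap φ p
  have ext : n ≤ inverseIdeal (exteriorPowerMap φ p) :=
    n_idem.ge.trans <| (Ideal.mul_mono (hn.trans (Ideal.span_mono (Set.image_mono hnφ)))
      n_le_pow).trans <| span_sq_mul_pow_inverseIdeal_le_inverseIdeal_exteriorPowerMap φ p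
  exact ⟨isAlmostIsomorphism_of_map_le_inverseIdeal tensor,
    isAlmostIsomorphism_of_map_le_inverseIdeal sym,
    isAlmostIsomorphism_of_map_le_inverseIdeal ext⟩

/-- Let `m·m = m` with `m ⊗_V m` flat, `R` a commutative `V`-algebra
and `φ : M → N` an almost isomorphism of `R`-modules.  Then for every `p ≥ 1` the
induced maps on `p`-th tensor, symmetric and exterior powers are almost
isomorphisms. -/
theorem powers_preserve_almost_isomorphisms
    (V : Type*) [CommRing V] (m : Ideal V) (hm : m * m = m)
    (hflat : Module.Flat V (TensorProduct V m m))
    (R : Type*) [CommRing R] [Algebra V R]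
    (M N : Type*) [AddCommGroup M] [Module R M] [AddCommGroup N] [Module R N]
    (φ : M →ₗ[R] N) (hφ : IsAlmostIsomorphism V m φ) :
    ∀ p : ℕ, 1 ≤ p →
      IsAlmostIsomorphism V m
        (PiTensorProduct.map (fun _ : Fin p => φ) :
          (⨂[R]^p M) →ₗ[R] ⨂[R]^p N) ∧
      IsAlmostIsomorphism V m (symPowerMap φ p) ∧
      IsAlmostIsomorphism V m (exteriorPowerMap φ p) := by
  exact fun p _ =>
    powers_preserve_almost_isomorphisms_general (le_span_sq_of_flat_tensorProduct hm) hφ p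
end
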